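/- arXiv:0911.0258 — 3 statements merged into one kernel-verified Lean document; each statement's English description precedes it below -/
import Mathlib

section
/- Let Q be a positive constant such that Q² ≥ sup σ + 7|P|² + 3A + 9|J|, and for μ > 0 set u⁺_μ = √(1 + M/r + μ²/(4r²)) − 1 − μ/(2r) with M = √(Q² + μ²), and Φ⁺_μ = 1 + μ/(2r) + u⁺_μ. Then u⁺_μ is a supersolution: Δu⁺_μ ≤ −K²/(8(Φ⁺_μ)⁷) − 2πρ/(Φ⁺_μ)³ at every point of ℝ³∖{0}. -/
open MeasureTheory Real Filter Metric Set
open scoped ENNReal RealInnerProductSpace NNReal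

noncomputable section

abbrev E3 : Type := EuclideanSpace ℝ (Fin 3)

/-- The flat Laplacian on `ℝ³`. -/
def lap (u : E3 → ℝ) (x : E3) : ℝ :=
  ∑ i : Fin 3, iteratedFDeriv ℝ 2 u x ![EuclideanSpace.single i 1, EuclideanSpace.single i 1]

/-- The weighted norm `‖f‖_{L'²_δ}` (with values in `ℝ≥0∞`). -/
def wL2norm (δ : ℝ) (f : E3 → ℝ) : ℝ≥0∞ :=
  (∫⁻ x in {x : E3 | x ≠ 0}, (‖f x‖₊ : ℝ≥0∞) ^ (2:ℝ) * (‖x‖₊ : ℝ≥0∞) ^ (-2*δ - 3)) ^ (1/2 : ℝ)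

/-- The weighted Sobolev norm `‖f‖_{H'^k_δ} = Σ_{j=0}^k ‖D^j f‖_{L'²_{δ-j}}`. -/
def wHnorm (k : ℕ) (δ : ℝ) (f : E3 → ℝ) : ℝ≥0∞ :=
  ∑ j ∈ Finset.range (k+1), wL2norm (δ - j) (fun x => ‖iteratedFDeriv ℝ j f x‖)

/-- Test functions: `C^∞` functions with compact support contained in `ℝ³ ∖ {0}`. -/
def IsTestFun (g : E3 → ℝ) : Prop :=
  ContDiff ℝ (⊤ : ℕ∞) g ∧ HasCompactSupport g ∧ tsupport g ⊆ {x : E3 | x ≠ 0}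

/-- Membership in `H'^k_δ`, the completion of `C^∞_c(ℝ³∖{0})` in the norm `wHnorm k δ`. -/
def MemH (k : ℕ) (δ : ℝ) (f : E3 → ℝ) : Prop :=
  wHnorm k δ f < ⊤ ∧
    ∀ ε : ℝ≥0∞, 0 < ε → ∃ g : E3 → ℝ, IsTestFun g ∧ wHnorm k δ (f - g) ≤ ε

/-- Membership in `L'²_δ`. -/
def MemL2 (δ : ℝ) (f : E3 → ℝ) : Prop :=
  AEMeasurable f ∧ wL2norm δ f < ⊤

/-- The square `K²` of the extrinsic curvature tensor `K = K_P + K_J + K_A`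
(with `Jᵃ = (0,0,J)`). -/
def Ksq (A J : ℝ) (P : E3) (x : E3) : ℝ :=
  6 * (A^2 + 3 * J^2 * ((x 0)^2 + (x 1)^2) / ‖x‖^2) / ‖x‖^6
  + (12 * A * ⟪P, ‖x‖⁻¹ • x⟫
      + 18 * J * ((‖x‖⁻¹ * x 0) * P 1 - (‖x‖⁻¹ * x 1) * P 0)) / ‖x‖^5
  + 9 * (‖P‖^2 + 2 * ⟪P, ‖x‖⁻¹ • x⟫^2) / (2 * ‖x‖^4)

/-- The nonlinearity `F(x,Φ) = -K²/(8Φ⁷) - 2πρ/Φ³`, with `ρ = σ/(8π r⁴)`. -/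
def Fnl (A J : ℝ) (P : E3) (σ : E3 → ℝ) (x : E3) (Φ : ℝ) : ℝ :=
  - Ksq A J P x / (8 * Φ^7) - σ x / (4 * ‖x‖^4 * Φ^3)

/-- `u` is the (nonnegative, `C¹`, decaying) solution `u_μ` of `Δu = F(x, 1 + μ/2r + u)`. -/
def IsSolμ (A J : ℝ) (P : E3) (σ : E3 → ℝ) (μ : ℝ) (u : E3 → ℝ) : Prop :=
  (∀ x, 0 ≤ u x) ∧ ContDiff ℝ 1 u ∧
    Tendsto u (cocompact E3) (nhds 0) ∧
    ∀ x : E3, x ≠ 0 → lap u x = Fnl A J P σ x (1 + μ / (2*‖x‖) + u x)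

/-- The extreme (μ = 0) equation `Δu = -K²/(8(1+u)⁷) - 2πρ/(1+u)³` on `ℝ³∖{0}`. -/
def IsExtremeSol (A J : ℝ) (P : E3) (σ : E3 → ℝ) (u : E3 → ℝ) : Prop :=
  ∀ x : E3, x ≠ 0 →
    lap u x = - Ksq A J P x / (8 * (1 + u x)^7) - σ x / (4 * ‖x‖^4 * (1 + u x)^3)

/-- The Laplace–Beltrami operator on the unit sphere: Euclidean Laplacian of the
degree-zero homogeneous extension. -/
def sphLap (V : E3 → ℝ) (p : E3) : ℝ := lap (fun y => V (‖y‖⁻¹ • y)) p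

/-- A function is `C^∞` on the sphere `S²` iff its homogeneous extension is smooth away
from the origin. -/
def SmoothOnSphere (V : E3 → ℝ) : Prop :=
  ContDiffOn ℝ (⊤ : ℕ∞) (fun y : E3 => V (‖y‖⁻¹ • y)) {x : E3 | x ≠ 0}

/-- `sin²θ` for a point on the unit sphere (polar axis = third coordinate axis). -/
def sin2θ (p : E3) : ℝ := (p 0)^2 + (p 1)^2


/-- The upper bound `u⁺_μ = √(1 + M/r + μ²/(4r²)) - 1 - μ/(2r)`, `M = √(Q² + μ²)`. -/
def uplus (Q μ : ℝ) (x : E3) : ℝ :=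
  Real.sqrt (1 + Real.sqrt (Q^2 + μ^2) / ‖x‖ + μ^2 / (4*‖x‖^2)) - 1 - μ / (2*‖x‖)

theorem lap_radial_sq (f f1 f2 : ℝ → ℝ) (h1 : ∀ s, 0 < s → HasDerivAt f (f1 s) s)
    (h2 : ∀ s, 0 < s → HasDerivAt f1 (f2 s) s) (x : E3) (hx : x ≠ 0) :
    lap (fun y => f (‖y‖^2)) x = 4 * f2 (‖x‖^2) * ‖x‖^2 + 6 * f1 (‖x‖^2) := by
  have hpos : ∀ y : E3, y ≠ 0 → 0 < ‖y‖^2 := fun y hy => by positivity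
  have hs : ∀ y : E3, HasFDerivAt (fun z : E3 => ‖z‖^2) ((2:ℝ) • innerSL ℝ y) y := fun y => by
    have h := (hasStrictFDerivAt_norm_sq y).hasFDerivAt
    rwa [← Nat.cast_smul_eq_nsmul ℝ, Nat.cast_ofNat] at h
  have hd : ∀ y : E3, y ≠ 0 →
      HasFDerivAt (fun z : E3 => f (‖z‖^2)) (f1 (‖y‖^2) • (2:ℝ) • innerSL ℝ y) y := fun y hy =>
    (h1 _ (hpos y hy)).comp_hasFDerivAt y (hs y)
  have he : fderiv ℝ (fun z : E3 => f (‖z‖^2)) =ᶠ[nhds x]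
      fun y => f1 (‖y‖^2) • (2:ℝ) • innerSL ℝ y := by
    filter_upwards [isOpen_ne.mem_nhds hx] with y hy
    exact (hd y hy).fderiv
  have hlin : HasFDerivAt (fun y : E3 => (2:ℝ) • innerSL ℝ y) ((2:ℝ) • innerSL ℝ (E := E3)) x :=
    ((innerSL ℝ (E := E3)).hasFDerivAt (x := x)).const_smul (2:ℝ)
  have h22 := (((h2 _ (hpos x hx)).comp_hasFDerivAt x (hs x)).smul hlin).congr_of_eventuallyEq he
  have hn : ‖x‖^2 = x 0 ^2 + x 1 ^2 + x 2 ^2 := by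
    rw [EuclideanSpace.norm_sq_eq]; simp [Fin.sum_univ_three]
  unfold lap
  simp only [iteratedFDeriv_two_apply, h22.fderiv]
  have h11 : ∀ i : Fin 3, innerSL ℝ (EuclideanSpace.single i (1:ℝ)) (EuclideanSpace.single i (1:ℝ)) = (1:ℝ) := by
    intro i
    rw [innerSL_apply_apply]; simp
  simp [Fin.sum_univ_three, EuclideanSpace.inner_single_right, h11]
  generalize f2 (‖x‖^2) = a
  generalize f1 (‖x‖^2) = b
  rw [hn]
  ring

theorem lap_radial (h h1 h2 : ℝ → ℝ) (hh1 : ∀ s, 0 < s → HasDerivAt h (h1 s) s)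
    (hh2 : ∀ s, 0 < s → HasDerivAt h1 (h2 s) s) (x : E3) (hx : x ≠ 0) :
    lap (fun y => h ‖y‖) x = h2 ‖x‖ + 2 * h1 ‖x‖ / ‖x‖ := by
  have e : (fun y : E3 => h ‖y‖) = fun y => (fun s => h (√s)) (‖y‖^2) := by
    funext y; simp [Real.sqrt_sq]
  have hr : 0 < ‖x‖ := norm_pos_iff.2 hx
  rw [e, lap_radial_sq (fun s => h (√s)) (fun s => h1 (√s) * (1 / (2 * √s)))
    (fun s => (h2 (√s) * (1 / (2 * √s))) * (1 / (2 * √s))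
      + h1 (√s) * (-(1 / (4 * s * √s)))) _ _ x hx]
  · simp only [Real.sqrt_sq hr.le]
    field_simp
    ring
  · intro s hs
    exact (hh1 _ (Real.sqrt_pos.2 hs)).comp s (Real.hasDerivAt_sqrt hs.ne')
  · intro s hs
    have q := Real.sqrt_pos.2 hs
    have a := (hh2 _ q).comp s (Real.hasDerivAt_sqrt hs.ne')
    have b := ((Real.hasDerivAt_sqrt hs.ne').const_mul 2).inv (by positivity)
    have c := a.mul b
    simp only [one_div] at c ⊢
    refine HasDerivAt.congr_deriv c ?_
    have hq := Real.sq_sqrt hs.le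
    simp only [Function.comp_apply, Pi.inv_apply]
    generalize √s = t at *
    subst hq
    field_simp
    ring

theorem lap_uplus (Q μ : ℝ) (x : E3) (hx : x ≠ 0) :
    lap (uplus Q μ) x = - Q^2 / (4 * ‖x‖^4 *
      √(1 + √(Q^2 + μ^2) / ‖x‖ + μ^2 / (4*‖x‖^2)) ^ 3) := by
  have hM2 : √(Q^2 + μ^2)^2 = Q^2 + μ^2 := Real.sq_sqrt (by positivity)
  have hM0 := Real.sqrt_nonneg (Q^2 + μ^2)
  have e : uplus Q μ = fun y => (fun r => √(1 + √(Q^2 + μ^2) / r + μ^2 / (4*r^2)) - 1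
    - μ / (2*r)) ‖y‖ := rfl
  rw [e]
  generalize √(Q^2 + μ^2) = M at *
  have hw : ∀ r : ℝ, 0 < r → 0 < 1 + M / r + μ^2 / (4*r^2) := fun r hr => by positivity
  have hw1 : ∀ r : ℝ, 0 < r → HasDerivAt (fun r => 1 + M / r + μ^2 / (4*r^2))
      (-M / r^2 - μ^2/(2*r^3)) r := fun r hr => by
    have a := (hasDerivAt_inv hr.ne').const_mul M
    have b := (((hasDerivAt_pow 2 r).const_mul 4).inv (by positivity)).const_mul (μ^2)
    have c := (a.const_add 1).add b
    simp only [div_eq_mul_inv] at c ⊢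
    refine HasDerivAt.congr_deriv c ?_
    field_simp
    try ring
  have hw2 : ∀ r : ℝ, 0 < r → HasDerivAt (fun r => -M / r^2 - μ^2/(2*r^3))
      (2 * M / r^3 + 3 * μ^2/(2*r^4)) r := fun r hr => by
    have a := ((hasDerivAt_pow 2 r).inv (by positivity)).const_mul (-M)
    have b := (((hasDerivAt_pow 3 r).const_mul 2).inv (by positivity)).const_mul (μ^2)
    have c := a.sub b
    simp only [div_eq_mul_inv] at c ⊢
    refine HasDerivAt.congr_deriv c ?_
    field_simp
    try ring
  have hm1 : ∀ r : ℝ, 0 < r → HasDerivAt (fun r => μ / (2*r)) (-μ / (2*r^2)) r := fun r hr => by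
    have b := (((hasDerivAt_id r).const_mul 2).inv (by simpa using hr.ne')).const_mul μ
    simp only [div_eq_mul_inv] at b ⊢
    refine HasDerivAt.congr_deriv b ?_
    try simp only [id]
    field_simp
    try ring
  have hm2 : ∀ r : ℝ, 0 < r → HasDerivAt (fun r => -μ / (2*r^2)) (μ / r^3) r := fun r hr => by
    have b := (((hasDerivAt_pow 2 r).const_mul 2).inv (by positivity)).const_mul (-μ)
    simp only [div_eq_mul_inv] at b ⊢
    refine HasDerivAt.congr_deriv b ?_
    field_simp
    try ring
  have hr : 0 < ‖x‖ := norm_pos_iff.2 hx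
  rw [lap_radial (fun r => √(1 + M / r + μ^2 / (4*r^2)) - 1 - μ / (2*r)) _ _
    (fun r hr => (((hw1 r hr).sqrt (hw r hr).ne').sub_const 1).sub (hm1 r hr))
    (fun r hr => ((hw2 r hr).div (((hw1 r hr).sqrt (hw r hr).ne').const_mul 2)
      (mul_pos two_pos (Real.sqrt_pos.2 (hw r hr))).ne').sub (hm2 r hr)) x hx]
  generalize ‖x‖ = r at *
  have hW := hw r hr
  have hS := Real.sqrt_pos.2 hW
  have hS2 := Real.sq_sqrt hW.le
  generalize √(1 + M / r + μ^2 / (4*r^2)) = S at *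
  have hQ : Q^2 = M^2 - μ^2 := by linarith
  rw [hQ]
  field_simp at hS2 ⊢
  linear_combination (4 * μ^2) * hS2

theorem Ksq_bound (A J : ℝ) (hA : 0 ≤ A) (P x : E3) (hx : x ≠ 0) :
    Ksq A J P x * ‖x‖^4 ≤ (6*A^2 + 18*J^2) / ‖x‖^2 + (12*A*‖P‖ + 18*(|J| * ‖P‖)) / ‖x‖
      + 27/2 * ‖P‖^2 := by
  have hr : 0 < ‖x‖ := norm_pos_iff.2 hx
  have hn : ‖x‖^2 = x 0 ^2 + x 1 ^2 + x 2 ^2 := by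
    rw [EuclideanSpace.norm_sq_eq]; simp [Fin.sum_univ_three]
  have hp : ‖P‖^2 = P 0 ^2 + P 1 ^2 + P 2 ^2 := by
    rw [EuclideanSpace.norm_sq_eq]; simp [Fin.sum_univ_three]
  have hu : ‖‖x‖⁻¹ • x‖ = 1 := by rw [norm_smul]; simp [hr.ne']
  have hi : |⟪P, ‖x‖⁻¹ • x⟫| ≤ ‖P‖ := by
    have := abs_real_inner_le_norm P (‖x‖⁻¹ • x)
    rwa [hu, mul_one] at this
  have hc : |(‖x‖⁻¹ * x 0) * P 1 - (‖x‖⁻¹ * x 1) * P 0| ≤ ‖P‖ := by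
    apply abs_le_of_sq_le_sq _ (norm_nonneg P)
    have h1 : (‖x‖⁻¹ * x 0)^2 + (‖x‖⁻¹ * x 1)^2 ≤ 1 := by
      rw [mul_pow, mul_pow, ← mul_add, inv_pow, inv_mul_le_iff₀ (by positivity), hn]
      nlinarith [sq_nonneg (x 2)]
    generalize ‖x‖⁻¹ * x 0 = a at *
    generalize ‖x‖⁻¹ * x 1 = b at *
    rw [hp]
    nlinarith [sq_nonneg (a * P 0 + b * P 1), sq_nonneg (P 2),
      mul_nonneg (sub_nonneg.2 h1) (add_nonneg (sq_nonneg (P 0)) (sq_nonneg (P 1)))]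
  have hs : ((x 0)^2 + (x 1)^2) / ‖x‖^2 ≤ 1 := by
    rw [div_le_one (by positivity), hn]; nlinarith [sq_nonneg (x 2)]
  have hJ : J * ((‖x‖⁻¹ * x 0) * P 1 - (‖x‖⁻¹ * x 1) * P 0) ≤ |J| * ‖P‖ :=
    (le_abs_self _).trans (by rw [abs_mul]; gcongr)
  have hAi : A * ⟪P, ‖x‖⁻¹ • x⟫ ≤ A * ‖P‖ :=
    mul_le_mul_of_nonneg_left ((le_abs_self _).trans hi) hA
  have hi2 : ⟪P, ‖x‖⁻¹ • x⟫^2 ≤ ‖P‖^2 := sq_le_sq' (abs_le.1 hi).1 (abs_le.1 hi).2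
  have key : Ksq A J P x * ‖x‖^4 =
      (6*A^2 + 18*(J^2*(((x 0)^2 + (x 1)^2) / ‖x‖^2))) / ‖x‖^2
      + (12 * (A * ⟪P, ‖x‖⁻¹ • x⟫)
      + 18 * (J * ((‖x‖⁻¹ * x 0) * P 1 - (‖x‖⁻¹ * x 1) * P 0))) / ‖x‖
      + 9/2 * (‖P‖^2 + 2 * ⟪P, ‖x‖⁻¹ • x⟫^2) := by
    unfold Ksq
    generalize ⟪P, ‖x‖⁻¹ • x⟫ = i
    generalize (‖x‖⁻¹ * x 0) * P 1 - (‖x‖⁻¹ * x 1) * P 0 = c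
    field_simp
    try ring
  rw [key]
  have hJs := mul_le_mul_of_nonneg_left hs (sq_nonneg J)
  have t1 : (6*A^2 + 18*(J^2*(((x 0)^2 + (x 1)^2) / ‖x‖^2))) / ‖x‖^2
      ≤ (6*A^2 + 18*J^2) / ‖x‖^2 := by
    apply div_le_div_of_nonneg_right _ (by positivity); linarith
  have t2 : (12 * (A * ⟪P, ‖x‖⁻¹ • x⟫)
      + 18 * (J * ((‖x‖⁻¹ * x 0) * P 1 - (‖x‖⁻¹ * x 1) * P 0))) / ‖x‖
      ≤ (12*A*‖P‖ + 18*(|J| * ‖P‖)) / ‖x‖ := by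
    apply div_le_div_of_nonneg_right _ hr.le; linarith
  linarith

/-- `u⁺_μ` is a supersolution,
`Δu⁺_μ ≤ -K²/(8(Φ⁺_μ)⁷) - 2πρ/(Φ⁺_μ)³` on `ℝ³∖{0}`, where `Φ⁺_μ = 1 + μ/(2r) + u⁺_μ`. -/
theorem uplus_supersolution
    (A J : ℝ) (hA : 0 ≤ A) (P : E3)
    (σ : E3 → ℝ) (hσsmooth : ContDiff ℝ (⊤ : ℕ∞) σ) (hσnonneg : ∀ x, 0 ≤ σ x)
    (hσbdd : ∃ C, ∀ x, σ x ≤ C)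
    (Q : ℝ) (hQ : 0 < Q)
    (hQ2 : sSup (Set.range σ) + 7*‖P‖^2 + 3*A + 9*|J| ≤ Q^2)
    (μ : ℝ) (hμ : 0 < μ) :
    ∀ x : E3, x ≠ 0 →
      lap (uplus Q μ) x ≤
        - Ksq A J P x / (8 * (1 + μ / (2*‖x‖) + uplus Q μ x)^7)
          - σ x / (4 * ‖x‖^4 * (1 + μ / (2*‖x‖) + uplus Q μ x)^3) := by
  intro x hx
  have hr : 0 < ‖x‖ := norm_pos_iff.2 hx
  have hΦ : 1 + μ / (2*‖x‖) + uplus Q μ x =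
      √(1 + √(Q^2 + μ^2) / ‖x‖ + μ^2 / (4*‖x‖^2)) := by
    unfold uplus; ring
  have hK := Ksq_bound A J hA P x hx
  have hσx : σ x ≤ sSup (Set.range σ) := by
    obtain ⟨C, hC⟩ := hσbdd
    exact le_csSup ⟨C, by rintro _ ⟨y, rfl⟩; exact hC y⟩ ⟨x, rfl⟩
  rw [hΦ, lap_uplus Q μ x hx]
  have hMQ : Q ≤ √(Q^2 + μ^2) := Real.le_sqrt_of_sq_le (by nlinarith [sq_nonneg μ])
  generalize √(Q^2 + μ^2) = M at *
  have hW : 1 + Q / ‖x‖ ≤ 1 + M / ‖x‖ + μ^2 / (4*‖x‖^2) := by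
    have a : Q / ‖x‖ ≤ M / ‖x‖ := by gcongr
    have b : 0 ≤ μ^2 / (4*‖x‖^2) := by positivity
    linarith
  have hW0 : 0 < 1 + Q / ‖x‖ := by positivity
  have hS := Real.sqrt_pos.2 (hW0.trans_le hW)
  have hS2 := Real.sq_sqrt (hW0.trans_le hW).le
  generalize √(1 + M / ‖x‖ + μ^2 / (4*‖x‖^2)) = S at *
  have hS4 : (1 + Q / ‖x‖)^2 ≤ S^4 := by
    have : S^4 = (S^2)^2 := by ring
    rw [this, hS2]
    gcongr
  have hJ := abs_nonneg J
  have hJ2 := sq_abs J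
  have hp := norm_nonneg P
  have hQp : ‖P‖ ≤ Q := by
    apply abs_le_of_sq_le_sq' _ hQ.le |>.2
    have h0 := (hσnonneg x).trans hσx
    nlinarith [sq_nonneg ‖P‖]
  have hqQ : 7*‖P‖^2 + 3*A + 9*|J| ≤ Q^2 - σ x := by linarith
  have hqQ' : 7*‖P‖^2 + 3*A + 9*|J| ≤ Q^2 := by linarith [hσnonneg x]
  rw [← hJ2] at hK
  generalize |J| = j at *
  generalize hr' : ‖x‖ = r at *
  generalize ‖P‖ = p at *
  have main : Ksq A J P x * r^4 ≤ 2 * ((7*p^2 + 3*A + 9*j) * S^4) := by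
    have h1 : (7*p^2 + 3*A + 9*j) * (1 + Q / r)^2 ≤ (7*p^2 + 3*A + 9*j) * S^4 :=
      mul_le_mul_of_nonneg_left hS4 (by positivity)
    have h2 : (7*p^2 + 3*A + 9*j) * (1 + Q / r)^2 = (7*p^2 + 3*A + 9*j)
      + 2 * ((7*p^2 + 3*A + 9*j) * Q) / r + (7*p^2 + 3*A + 9*j) * Q^2 / r^2 := by
      field_simp
      try ring
    have h3 : (6*A^2 + 18*j^2) / r^2 ≤ 2 * ((7*p^2 + 3*A + 9*j) * Q^2 / r^2) := by
      rw [← mul_div_assoc]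
      apply div_le_div_of_nonneg_right _ (by positivity)
      have a1 : (3*A + 9*j) * (3*A + 9*j) ≤ (7*p^2 + 3*A + 9*j) * Q^2 := by
        exact mul_le_mul (by linarith [sq_nonneg p]) (by linarith [sq_nonneg p]) (by positivity) (by positivity)
      nlinarith [mul_nonneg hA hJ, sq_nonneg A, sq_nonneg j]
    have h4 : (12*A*p + 18*(j*p)) / r ≤ 2 * (2 * ((7*p^2 + 3*A + 9*j) * Q) / r) := by
      rw [← mul_div_assoc]
      apply div_le_div_of_nonneg_right _ hr.le
      have a1 : (3*A + 9*j) * p ≤ (7*p^2 + 3*A + 9*j) * Q := by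
        exact mul_le_mul (by linarith [sq_nonneg p]) hQp hp (by positivity)
      linarith [mul_nonneg hA hp, mul_nonneg hJ hp]
    linarith [sq_nonneg p]
  have main2 : Ksq A J P x * r^4 ≤ 2 * ((Q^2 - σ x) * S^4) :=
    main.trans (by gcongr)
  have e : (- Ksq A J P x / (8 * S^7) - σ x / (4 * r^4 * S^3)) - - Q^2 / (4 * r^4 * S^3)
      = (2 * ((Q^2 - σ x) * S^4) - Ksq A J P x * r^4) / (8 * r^4 * S^7) := by
    field_simp
    ring
  have := div_nonneg (sub_nonneg.2 main2) (by positivity : 0 ≤ 8 * r^4 * S^7)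
  linarith
end
end

section
/- Assume A > 0 or J ≠ 0. There exists a unique positive solution V ∈ C^∞(S²) of the equation Δ̃V − V/4 = −(3A² + 9J² sin²θ)/(4V⁷) − σ₀/(4V³) on the unit sphere S², and there exist positive constants c₋, c₊ with c₋ ≤ V ≤ c₊. -/
open MeasureTheory Real Filter Metric Set
open scoped ENNReal RealInnerProductSpace NNReal

noncomputable section

open scoped Topology

/-- The infinitesimal rotation `y ↦ e_i × y`. -/
def rotB (i : Fin 3) : E3 →L[ℝ] E3 :=
  (EuclideanSpace.proj (i+1) : E3 →L[ℝ] ℝ).smulRight (EuclideanSpace.single (i+2) (1:ℝ))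
   - (EuclideanSpace.proj (i+2) : E3 →L[ℝ] ℝ).smulRight (EuclideanSpace.single (i+1) (1:ℝ))

lemma rotB_apply (i : Fin 3) (y : E3) :
    rotB i y = y (i+1) • EuclideanSpace.single (i+2) (1:ℝ)
      - y (i+2) • EuclideanSpace.single (i+1) (1:ℝ) := by
  simp [rotB]

lemma rotB_three (i : Fin 3) (y : E3) : rotB i (rotB i (rotB i y)) = - rotB i y := by
  ext j
  fin_cases i <;> fin_cases j <;> simp [rotB_apply]

/-- Rotation flow (Rodrigues formula). -/
def rotR (i : Fin 3) (t : ℝ) : E3 →L[ℝ] E3 :=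
  ContinuousLinearMap.id ℝ E3 + Real.sin t • rotB i + (1 - Real.cos t) • (rotB i ∘L rotB i)

lemma rotR_apply (i : Fin 3) (t : ℝ) (y : E3) :
    rotR i t y = y + Real.sin t • rotB i y + (1 - Real.cos t) • rotB i (rotB i y) := by
  simp [rotR]

lemma normsq_E3 (y : E3) : ‖y‖^2 = y 0 ^2 + y 1 ^2 + y 2 ^2 := by
  simp [EuclideanSpace.norm_sq_eq, Fin.sum_univ_three]

lemma rotR_norm (i : Fin 3) (t : ℝ) (y : E3) : ‖rotR i t y‖ = ‖y‖ := by
  have h : ‖rotR i t y‖^2 = ‖y‖^2 := by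
    rw [normsq_E3, normsq_E3]
    have := Real.sin_sq_add_cos_sq t
    fin_cases i <;> simp [rotR_apply, rotB_apply] <;> grind
  exact (sq_eq_sq₀ (norm_nonneg _) (norm_nonneg _)).1 h

lemma rotR_zero (i : Fin 3) (y : E3) : rotR i 0 y = y := by simp [rotR_apply]

lemma rotR_hasDerivAt (i : Fin 3) (t : ℝ) (y : E3) :
    HasDerivAt (fun t => rotR i t y) (rotB i (rotR i t y)) t := by
  have h1 : HasDerivAt (fun t => y + Real.sin t • rotB i y + (1 - Real.cos t) • rotB i (rotB i y))
      (Real.cos t • rotB i y + (Real.sin t) • rotB i (rotB i y)) t := by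
    have a := ((Real.hasDerivAt_sin t).smul_const (rotB i y)).const_add y
    have b := (((Real.hasDerivAt_cos t).const_sub 1).smul_const (rotB i (rotB i y)))
    have e := a.add b
    simp only [neg_neg] at e
    exact e
  simp only [rotR_apply]
  convert h1 using 1
  simp only [map_add, map_smul, rotB_three]
  module

/-- Rotation as a linear isometry equivalence. -/
def rotE (i : Fin 3) (t : ℝ) : E3 ≃ₗᵢ[ℝ] E3 :=
  LinearIsometry.toLinearIsometryEquiv ⟨(rotR i t).toLinearMap, rotR_norm i t⟩ rfl

lemma rotE_apply (i : Fin 3) (t : ℝ) (y : E3) : rotE i t y = rotR i t y := rfl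

lemma rotB_norm_le (i : Fin 3) (y : E3) : ‖rotB i y‖ ≤ ‖y‖ := by
  have h : ‖rotB i y‖^2 ≤ ‖y‖^2 := by
    rw [normsq_E3, normsq_E3]
    fin_cases i <;> simp [rotB_apply] <;> nlinarith [sq_nonneg (y 0), sq_nonneg (y 1), sq_nonneg (y 2)]
  exact (sq_le_sq₀ (norm_nonneg _) (norm_nonneg _)).1 h

/-- Rotational derivative. -/
def rX (i : Fin 3) (f : E3 → ℝ) (y : E3) : ℝ := fderiv ℝ f y (rotB i y)

/-- The angular Laplacian. -/
def aL (f : E3 → ℝ) (y : E3) : ℝ := ∑ i : Fin 3, rX i (rX i f) y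

lemma rX_deriv (i : Fin 3) {f : E3 → ℝ} (y : E3) (t : ℝ)
    (hf : DifferentiableAt ℝ f (rotR i t y)) :
    HasDerivAt (fun t => f (rotR i t y)) (rX i f (rotR i t y)) t :=
  hf.hasFDerivAt.comp_hasDerivAt t (rotR_hasDerivAt i t y)

lemma rX_contDiffAt (i : Fin 3) {f : E3 → ℝ} {y : E3} {n m : WithTop ℕ∞}
    (hf : ContDiffAt ℝ n f y) (h : m + 1 ≤ n) : ContDiffAt ℝ m (rX i f) y := by
  have := hf.fderiv_right h
  exact this.clm_apply (rotB i).contDiff.contDiffAt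

lemma rX_contDiff (i : Fin 3) {f : E3 → ℝ} (hf : ContDiff ℝ (⊤ : ℕ∞) f) :
    ContDiff ℝ (⊤ : ℕ∞) (rX i f) :=
  contDiff_iff_contDiffAt.2 fun _ => rX_contDiffAt i hf.contDiffAt le_rfl

lemma rX_rX {f : E3 → ℝ} {y : E3} (i : Fin 3) (hf : ContDiffAt ℝ 2 f y) :
    rX i (rX i f) y = fderiv ℝ (fderiv ℝ f) y (rotB i y) (rotB i y)
      + fderiv ℝ f y (rotB i (rotB i y)) := by
  have h1 : DifferentiableAt ℝ (fderiv ℝ f) y :=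
    (hf.fderiv_right (m := 1) (by norm_num)).differentiableAt (by norm_num)
  have h2 : HasFDerivAt (rX i f) _ y :=
    h1.hasFDerivAt.clm_apply (rotB i).hasFDerivAt
  rw [rX, h2.fderiv]
  simp [add_comm]

lemma E3_decomp (y : E3) : y = y 0 • EuclideanSpace.single 0 (1:ℝ)
    + y 1 • EuclideanSpace.single 1 (1:ℝ) + y 2 • EuclideanSpace.single 2 (1:ℝ) := by
  ext j; fin_cases j <;> simp

lemma lap_eq {f : E3 → ℝ} {y : E3} : lap f y = ∑ i : Fin 3,
    fderiv ℝ (fderiv ℝ f) y (EuclideanSpace.single i 1) (EuclideanSpace.single i 1) := by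
  simp [lap, iteratedFDeriv_two_apply]

lemma aL_formula {f : E3 → ℝ} {y : E3} (hf : ContDiffAt ℝ 2 f y) :
    aL f y = ‖y‖^2 * lap f y - fderiv ℝ (fderiv ℝ f) y y y - 2 * fderiv ℝ f y y := by
  have hs : IsSymmSndFDerivAt ℝ f y := hf.isSymmSndFDerivAt (by simp)
  have s01 := hs.eq (EuclideanSpace.single 0 (1:ℝ)) (EuclideanSpace.single 1 (1:ℝ))
  have s02 := hs.eq (EuclideanSpace.single 0 (1:ℝ)) (EuclideanSpace.single 2 (1:ℝ))
  have s12 := hs.eq (EuclideanSpace.single 1 (1:ℝ)) (EuclideanSpace.single 2 (1:ℝ))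
  simp only [aL, rX_rX _ hf, lap_eq, Fin.sum_univ_three, normsq_E3]
  generalize fderiv ℝ (fderiv ℝ f) y = D at *
  generalize fderiv ℝ f y = d at *
  have hd := congrArg d (E3_decomp y)
  have hD : D y y = D (y 0 • EuclideanSpace.single 0 (1:ℝ)
    + y 1 • EuclideanSpace.single 1 (1:ℝ) + y 2 • EuclideanSpace.single 2 (1:ℝ)) (y 0 • EuclideanSpace.single 0 (1:ℝ)
    + y 1 • EuclideanSpace.single 1 (1:ℝ) + y 2 • EuclideanSpace.single 2 (1:ℝ)) := by
    rw [← E3_decomp y]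
  rw [hD, hd]
  simp [rotB_apply]
  simp only [s01, s02, s12]
  ring

lemma lap_basis {f : E3 → ℝ} {y : E3} (b : OrthonormalBasis (Fin 3) ℝ E3) :
    lap f y = ∑ i, fderiv ℝ (fderiv ℝ f) y (b i) (b i) := by
  have h1 := congrFun (InnerProductSpace.laplacian_eq_iteratedFDeriv_orthonormalBasis f b) y
  have h2 := congrFun (InnerProductSpace.laplacian_eq_iteratedFDeriv_orthonormalBasis f
    (EuclideanSpace.basisFun (Fin 3) ℝ)) y
  rw [h1] at h2
  simp only [iteratedFDeriv_two_apply] at h2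
  rw [lap_eq]
  simpa using h2.symm

lemma fderiv_comp_iso {F : Type*} [NormedAddCommGroup F] [NormedSpace ℝ F] (R : E3 ≃ₗᵢ[ℝ] E3)
    {f : E3 → F} (hf : Differentiable ℝ f) (y v : E3) :
    fderiv ℝ (fun y => f (R y)) y v = fderiv ℝ f (R y) (R v) := by
  have h : HasFDerivAt (fun y => f (R y))
    ((fderiv ℝ f (R y)).comp (R.toContinuousLinearEquiv : E3 →L[ℝ] E3)) y :=
    (hf (R y)).hasFDerivAt.comp y (R.toContinuousLinearEquiv : E3 →L[ℝ] E3).hasFDerivAt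
  rw [h.fderiv]; rfl

lemma contDiff_comp_iso (R : E3 ≃ₗᵢ[ℝ] E3) {n : WithTop ℕ∞} {f : E3 → ℝ} (hf : ContDiff ℝ n f) :
    ContDiff ℝ n (fun y => f (R y)) := hf.comp R.contDiff

lemma two_le_smooth : (2 : WithTop ℕ∞) ≤ ((⊤ : ℕ∞) : WithTop ℕ∞) :=
  WithTop.coe_le_coe.2 (le_top : (2 : ℕ∞) ≤ ⊤)

lemma aL_comp_iso (R : E3 ≃ₗᵢ[ℝ] E3) {f : E3 → ℝ} (hf : ContDiff ℝ (⊤ : ℕ∞) f) (y : E3) :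
    aL (fun y => f (R y)) y = aL f (R y) := by
  have hf2 : ContDiff ℝ 2 f := hf.of_le two_le_smooth
  have hd1 : Differentiable ℝ f := hf2.differentiable (by norm_num)
  have hd2 : Differentiable ℝ (fderiv ℝ f) :=
    (hf2.fderiv_right (m := 1) (by norm_num)).differentiable (by norm_num)
  have key : ∀ y v w, fderiv ℝ (fderiv ℝ (fun y => f (R y))) y v w
      = fderiv ℝ (fderiv ℝ f) (R y) (R v) (R w) := by
    intro y v w
    have h1 : Differentiable ℝ (fderiv ℝ (fun y => f (R y))) :=
      ((contDiff_comp_iso R hf2).fderiv_right (m := 1) (by norm_num)).differentiable (by norm_num)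
    have h2 : fderiv ℝ (fderiv ℝ (fun y => f (R y))) y v w
       = fderiv ℝ (fun y => fderiv ℝ (fun y => f (R y)) y w) y v := by
      rw [fderiv_clm_apply (h1 y) (by fun_prop)]; simp
    rw [h2]
    have h3 : (fun y => fderiv ℝ (fun y => f (R y)) y w)
       = fun y => (fun z => fderiv ℝ f z (R w)) (R y) := by
      funext y; exact fderiv_comp_iso R hd1 y w
    rw [h3, fderiv_comp_iso R (f := fun z => fderiv ℝ f z (R w)) (by fun_prop), fderiv_clm_apply (hd2 _) (by fun_prop)]
    simp
  rw [aL_formula (contDiff_comp_iso R hf2).contDiffAt, aL_formula hf2.contDiffAt,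
    lap_basis (f := f) ((EuclideanSpace.basisFun (Fin 3) ℝ).map R), lap_eq,
    fderiv_comp_iso R hd1]
  simp only [key]
  simp

lemma aL_le_of_max {f : E3 → ℝ} {p : E3} (hf : ContDiffAt ℝ 2 f p)
    (hm : ∀ᶠ y in 𝓝 p, ‖y‖ = ‖p‖ → f y ≤ f p) : aL f p ≤ 0 := by
  refine Finset.sum_nonpos fun i _ => ?_
  by_contra hpos
  push Not at hpos
  have hc0 : Tendsto (fun t => rotR i t p) (𝓝 0) (𝓝 p) := by
    have := (rotR_hasDerivAt i 0 p).continuousAt.tendsto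
    rwa [rotR_zero] at this
  have hd : ∀ᶠ y in 𝓝 p, DifferentiableAt ℝ f y := by
    have := hf.eventually (by simp)
    filter_upwards [this] with y hy using hy.differentiableAt (by norm_num)
  have hD : deriv (fun t => f (rotR i t p)) =ᶠ[𝓝 0] fun t => rX i f (rotR i t p) := by
    filter_upwards [hc0.eventually hd] with t ht using (rX_deriv i p t ht).deriv
  have hXd : DifferentiableAt ℝ (rX i f) p :=
    (rX_contDiffAt i hf (m := 1) (by norm_num)).differentiableAt (by norm_num)
  have hDD : deriv (deriv (fun t => f (rotR i t p))) 0 = rX i (rX i f) p := by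
    rw [hD.deriv_eq]
    have := rX_deriv i p 0 (f := rX i f) (by rwa [rotR_zero])
    rw [this.deriv, rotR_zero]
  have hcont : ContinuousAt (fun t => f (rotR i t p)) 0 :=
    (rX_deriv i p 0 (f := f) (by rw [rotR_zero]; exact hd.self_of_nhds)).continuousAt
  have hmax : IsLocalMax (fun t => f (rotR i t p)) 0 := by
    filter_upwards [hc0.eventually hm] with t ht
    simpa [rotR_zero] using ht (rotR_norm i t p)
  have hmin : IsLocalMin (fun t => f (rotR i t p)) 0 :=
    isLocalMin_of_deriv_deriv_pos (by rw [hDD]; exact hpos) hmax.deriv_eq_zero hcont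
  have heq : (fun t => f (rotR i t p)) =ᶠ[𝓝 0] fun _ => f (rotR i 0 p) := by
    filter_upwards [hmax, hmin] with t h1 h2 using le_antisymm h1 h2
  have : deriv (deriv (fun t => f (rotR i t p))) 0 = 0 := by
    have h3 := heq.deriv
    rw [h3.deriv_eq]; simp
  rw [hDD] at this
  exact hpos.ne' this

open scoped Topology

/-- Polynomial functions on `ℝ³`. -/
def Pol : Subalgebra ℝ (E3 → ℝ) := Algebra.adjoin ℝ (Set.range fun (i : Fin 3) (y : E3) => y i)

lemma pol_coord (i : Fin 3) : (fun y : E3 => y i) ∈ Pol := Algebra.subset_adjoin ⟨i, rfl⟩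

lemma pol_const (c : ℝ) : (fun _ : E3 => c) ∈ Pol := Pol.algebraMap_mem c

lemma pol_smooth {f : E3 → ℝ} (hf : f ∈ Pol) : ContDiff ℝ (⊤ : ℕ∞) f := by
  induction hf using Algebra.adjoin_induction with
  | mem x hx => obtain ⟨i, rfl⟩ := hx; fun_prop
  | algebraMap r => exact contDiff_const
  | add x y _ _ hx hy => exact hx.add hy
  | mul x y _ _ hx hy => exact hx.mul hy

lemma pol_lin (φ : E3 →ₗ[ℝ] ℝ) : (fun y => φ y) ∈ Pol := by
  have : (fun y => φ y) = (φ (EuclideanSpace.single 0 1)) • (fun y : E3 => y 0)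
     + (φ (EuclideanSpace.single 1 1)) • (fun y : E3 => y 1)
     + (φ (EuclideanSpace.single 2 1)) • (fun y : E3 => y 2) := by
    funext y
    conv_lhs => rw [E3_decomp y]
    simp only [map_add, map_smul, Pi.add_apply, Pi.smul_apply, smul_eq_mul]
    ring
  rw [this]
  exact Pol.add_mem (Pol.add_mem (Pol.smul_mem (pol_coord 0) _) (Pol.smul_mem (pol_coord 1) _))
    (Pol.smul_mem (pol_coord 2) _)

lemma pol_comp_iso (R : E3 ≃ₗᵢ[ℝ] E3) {f : E3 → ℝ} (hf : f ∈ Pol) : (fun y => f (R y)) ∈ Pol := by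
  induction hf using Algebra.adjoin_induction with
  | mem x hx =>
    obtain ⟨i, rfl⟩ := hx
    exact pol_lin ((EuclideanSpace.proj i : E3 →L[ℝ] ℝ).toLinearMap ∘ₗ R.toLinearEquiv.toLinearMap)
  | algebraMap r => exact pol_const r
  | add x y _ _ hx hy => exact Pol.add_mem hx hy
  | mul x y _ _ hx hy => exact Pol.mul_mem hx hy

lemma smooth_diff {f : E3 → ℝ} (hf : ContDiff ℝ (⊤ : ℕ∞) f) : Differentiable ℝ f :=
  hf.differentiable (by simp)

lemma rX_add (i : Fin 3) {f g : E3 → ℝ} (hf : ContDiff ℝ (⊤ : ℕ∞) f) (hg : ContDiff ℝ (⊤ : ℕ∞) g) :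
    rX i (f + g) = rX i f + rX i g := by
  funext y
  simp [rX, fderiv_add (smooth_diff hf y) (smooth_diff hg y)]

lemma rX_smul (i : Fin 3) (c : ℝ) (f : E3 → ℝ) :
    rX i (c • f) = c • rX i f := by
  funext y
  simp [rX, fderiv_const_smul_field]

lemma rX_mul (i : Fin 3) {f g : E3 → ℝ} (hf : ContDiff ℝ (⊤ : ℕ∞) f) (hg : ContDiff ℝ (⊤ : ℕ∞) g) :
    rX i (f * g) = rX i f * g + f * rX i g := by
  funext y
  simp [rX, fderiv_mul (smooth_diff hf y) (smooth_diff hg y)]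
  ring

lemma rX_const (i : Fin 3) (c : ℝ) : rX i (fun _ => c) = 0 := by
  funext y; simp [rX]

lemma rX_lin (i : Fin 3) (φ : E3 →L[ℝ] ℝ) : rX i (fun y => φ y) = fun y => φ (rotB i y) := by
  funext y; rw [rX]
  rw [φ.fderiv]

lemma aL_add {f g : E3 → ℝ} (hf : ContDiff ℝ (⊤ : ℕ∞) f) (hg : ContDiff ℝ (⊤ : ℕ∞) g) :
    aL (f + g) = aL f + aL g := by
  funext y
  simp [aL, rX_add _ hf hg, rX_add _ (rX_contDiff _ hf) (rX_contDiff _ hg), Finset.sum_add_distrib]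

lemma aL_smul (c : ℝ) (f : E3 → ℝ) : aL (c • f) = c • aL f := by
  funext y
  simp [aL, rX_smul, Finset.mul_sum]

lemma smooth_smul (c : ℝ) {f : E3 → ℝ} (hf : ContDiff ℝ (⊤ : ℕ∞) f) :
    ContDiff ℝ (⊤ : ℕ∞) (c • f) := hf.const_smul c

lemma smooth_mul {f g : E3 → ℝ} (hf : ContDiff ℝ (⊤ : ℕ∞) f) (hg : ContDiff ℝ (⊤ : ℕ∞) g) :
    ContDiff ℝ (⊤ : ℕ∞) (f * g) := hf.mul hg

lemma aL_sub {f g : E3 → ℝ} (hf : ContDiff ℝ (⊤ : ℕ∞) f) (hg : ContDiff ℝ (⊤ : ℕ∞) g) :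
    aL (f - g) = aL f - aL g := by
  have : f - g = f + (-1 : ℝ) • g := by funext y; simp; ring
  rw [this, aL_add hf (smooth_smul _ hg), aL_smul]
  funext y; simp; ring

lemma aL_const (c : ℝ) : aL (fun _ => c) = 0 := by
  funext y
  have : ∀ i, rX i (0 : E3 → ℝ) = 0 := fun i => rX_const i 0
  simp [aL, rX_const, this]

/-- every polynomial lies in a finite dimensional space invariant under rotational derivatives -/
lemma pol_fin {f : E3 → ℝ} (hf : f ∈ Pol) : ∃ W : Submodule ℝ (E3 → ℝ), W.FG ∧
    (∀ g ∈ W, g ∈ Pol) ∧ (∀ i, ∀ g ∈ W, rX i g ∈ W) ∧ f ∈ W := by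
  induction hf using Algebra.adjoin_induction with
  | mem x hx =>
    obtain ⟨j, rfl⟩ := hx
    refine ⟨LinearMap.range (M := Module.Dual ℝ E3) (M₂ := E3 → ℝ) (τ₁₂ := RingHom.id ℝ)
      ⟨⟨fun φ y => φ y, fun _ _ => rfl⟩, fun _ _ => rfl⟩, ?_, ?_, ?_, ?_⟩
    · rw [LinearMap.range_eq_map]
      exact Submodule.FG.map _ Module.Finite.fg_top
    · rintro g ⟨φ, rfl⟩
      exact pol_lin φ
    · rintro i g ⟨φ, rfl⟩
      refine ⟨φ ∘ₗ (rotB i).toLinearMap, ?_⟩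
      exact (rX_lin i (LinearMap.toContinuousLinearMap φ)).symm
    · exact ⟨(EuclideanSpace.proj j : E3 →L[ℝ] ℝ).toLinearMap, rfl⟩
  | algebraMap r =>
    refine ⟨Submodule.span ℝ {(1 : E3 → ℝ)}, Submodule.fg_span_singleton _, ?_, ?_, ?_⟩
    · intro g hg
      obtain ⟨a, rfl⟩ := Submodule.mem_span_singleton.1 hg
      exact Pol.smul_mem Pol.one_mem _
    · intro i g hg
      obtain ⟨a, rfl⟩ := Submodule.mem_span_singleton.1 hg
      have : rX i (a • (1 : E3 → ℝ)) = 0 := by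
        rw [rX_smul]
        have : rX i (1 : E3 → ℝ) = 0 := rX_const i 1
        rw [this, smul_zero]
      rw [this]; exact Submodule.zero_mem _
    · rw [Submodule.mem_span_singleton]
      exact ⟨r, by funext y; simp⟩
  | add x y _ _ hx hy =>
    obtain ⟨W1, a1, b1, c1, d1⟩ := hx
    obtain ⟨W2, a2, b2, c2, d2⟩ := hy
    refine ⟨W1 ⊔ W2, a1.sup a2, ?_, ?_, Submodule.add_mem_sup d1 d2⟩
    · intro g hg
      obtain ⟨u, hu, v, hv, rfl⟩ := Submodule.mem_sup.1 hg
      exact Pol.add_mem (b1 u hu) (b2 v hv)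
    · intro i g hg
      obtain ⟨u, hu, v, hv, rfl⟩ := Submodule.mem_sup.1 hg
      rw [rX_add i (pol_smooth (b1 u hu)) (pol_smooth (b2 v hv))]
      exact Submodule.add_mem_sup (c1 i u hu) (c2 i v hv)
  | mul x y _ _ hx hy =>
    obtain ⟨W1, a1, b1, c1, d1⟩ := hx
    obtain ⟨W2, a2, b2, c2, d2⟩ := hy
    have hP : ∀ g ∈ W1 * W2, g ∈ Pol := by
      intro g hg
      induction hg using Submodule.mul_induction_on' with
      | mem_mul_mem m hm n hn => exact Pol.mul_mem (b1 m hm) (b2 n hn)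
      | add x _ y _ hx hy => exact Pol.add_mem hx hy
    refine ⟨W1 * W2, a1.mul a2, hP, ?_, Submodule.mul_mem_mul d1 d2⟩
    intro i g hg
    induction hg using Submodule.mul_induction_on' with
    | mem_mul_mem m hm n hn =>
      rw [rX_mul i (pol_smooth (b1 m hm)) (pol_smooth (b2 n hn))]
      exact Submodule.add_mem _ (Submodule.mul_mem_mul (c1 i m hm) hn)
        (Submodule.mul_mem_mul hm (c2 i n hn))
    | add x hx0 y hy0 hx hy =>
      rw [rX_add i (pol_smooth (hP x hx0)) (pol_smooth (hP y hy0))]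
      exact Submodule.add_mem _ hx hy

lemma exists_max_sphere {f : E3 → ℝ} {r : ℝ} (hr : 0 ≤ r) (hf : ContinuousOn f (sphere (0:E3) r)) :
    ∃ p ∈ sphere (0:E3) r, ∀ q ∈ sphere (0:E3) r, f q ≤ f p := by
  have hne : (sphere (0:E3) r).Nonempty := NormedSpace.sphere_nonempty.2 hr
  obtain ⟨p, hp, h⟩ := (isCompact_sphere (0:E3) r).exists_isMaxOn hne hf
  exact ⟨p, hp, fun q hq => h hq⟩

lemma smooth_two {f : E3 → ℝ} (hf : ContDiff ℝ (⊤ : ℕ∞) f) (p : E3) : ContDiffAt ℝ 2 f p :=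
  (hf.of_le two_le_smooth).contDiffAt

lemma max_principle {f : E3 → ℝ} {r c M : ℝ} (hr : 0 ≤ r) (hc : 0 < c)
    (hf : ContDiff ℝ (⊤ : ℕ∞) f)
    (h : ∀ p ∈ sphere (0:E3) r, c * f p - aL f p ≤ M) : ∀ p ∈ sphere (0:E3) r, c * f p ≤ M := by
  obtain ⟨q, hq, hmax⟩ := exists_max_sphere hr hf.continuous.continuousOn
  have hL : aL f q ≤ 0 := aL_le_of_max (smooth_two hf q) (Eventually.of_forall fun y hy =>
    hmax y (by simp at hq ⊢; rw [hy, hq]))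
  intro p hp
  have := h q hq
  have := mul_le_mul_of_nonneg_left (hmax p hp) hc.le
  linarith

lemma max_principle_abs {f : E3 → ℝ} {r c M : ℝ} (hr : 0 ≤ r) (hc : 0 < c)
    (hf : ContDiff ℝ (⊤ : ℕ∞) f)
    (h : ∀ p ∈ sphere (0:E3) r, |c * f p - aL f p| ≤ M) :
    ∀ p ∈ sphere (0:E3) r, c * |f p| ≤ M := by
  intro p hp
  have h1 := max_principle hr hc hf (fun p hp => (abs_le.1 (h p hp)).2) p hp
  have h2 := max_principle (f := (-1 : ℝ) • f) hr hc (smooth_smul _ hf) (M := M) (fun p hp => by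
    have := (abs_le.1 (h p hp)).1
    rw [aL_smul]; simp; linarith) p hp
  simp at h2
  rcases abs_cases (f p) with ⟨e, _⟩ | ⟨e, _⟩ <;> rw [e] <;> linarith

lemma pol_solve {c : ℝ} (hc : 0 < c) {h : E3 → ℝ} (hh : h ∈ Pol) :
    ∃ f ∈ Pol, ∀ y, c * f y - aL f y = h y := by
  obtain ⟨W, hfg, hWP, hX, hhW⟩ := pol_fin hh
  have : Module.Finite ℝ W := Module.Finite.iff_fg.2 hfg
  have hL : ∀ g ∈ W, aL g ∈ W := by
    intro g hg
    have : aL g = ∑ i : Fin 3, rX i (rX i g) := by funext y; simp [aL]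
    rw [this]
    exact Submodule.sum_mem _ fun i _ => hX i _ (hX i _ hg)
  let T : W →ₗ[ℝ] W :=
    { toFun := fun g => ⟨c • (g : E3 → ℝ) - aL g, W.sub_mem (W.smul_mem _ g.2) (hL _ g.2)⟩
      map_add' := by
        intro g k
        ext y
        simp [aL_add (pol_smooth (hWP _ g.2)) (pol_smooth (hWP _ k.2))]
        ring
      map_smul' := by
        intro a g
        ext y
        simp [aL_smul]
        ring }
  have hT : ∀ (g : W) y, (T g : E3 → ℝ) y = c * (g : E3 → ℝ) y - aL g y := fun g y => rfl
  have hinj : Function.Injective T := by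
    rw [← LinearMap.ker_eq_bot, LinearMap.ker_eq_bot']
    intro g hg
    ext y
    have := max_principle_abs (f := g) (r := ‖y‖) (M := 0) (norm_nonneg _) hc
      (pol_smooth (hWP _ g.2)) (fun p _ => by rw [← hT, hg]; simp) y (by simp)
    have h0 : |(g : E3 → ℝ) y| ≤ 0 := by
      by_contra hh
      push Not at hh
      nlinarith
    simpa using h0
  obtain ⟨f, hf⟩ := (LinearMap.injective_iff_surjective.1 hinj) ⟨h, hhW⟩
  exact ⟨f, hWP _ f.2, fun y => by rw [← hT, hf]⟩

lemma pol_dense {h : E3 → ℝ} (hh : ContinuousOn h (sphere (0:E3) 1)) {ε : ℝ} (hε : 0 < ε) :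
    ∃ f ∈ Pol, ∀ p ∈ sphere (0:E3) 1, |f p - h p| ≤ ε := by
  let S := sphere (0:E3) 1
  let cf : Fin 3 → C(S, ℝ) := fun i => ⟨fun p => (p : E3) i, by fun_prop⟩
  let A : Subalgebra ℝ C(S, ℝ) := Algebra.adjoin ℝ (Set.range cf)
  have hA : ∀ g ∈ A, ∃ f ∈ Pol, ∀ p : S, g p = f p := by
    intro g hg
    induction hg using Algebra.adjoin_induction with
    | mem x hx => obtain ⟨i, rfl⟩ := hx; exact ⟨_, pol_coord i, fun p => rfl⟩
    | algebraMap r => exact ⟨_, pol_const r, fun p => rfl⟩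
    | add x y _ _ hx hy =>
      obtain ⟨f, hf, h1⟩ := hx
      obtain ⟨g, hg, h2⟩ := hy
      exact ⟨f + g, Pol.add_mem hf hg, fun p => by simp [h1, h2]⟩
    | mul x y _ _ hx hy =>
      obtain ⟨f, hf, h1⟩ := hx
      obtain ⟨g, hg, h2⟩ := hy
      exact ⟨f * g, Pol.mul_mem hf hg, fun p => by simp [h1, h2]⟩
  have hsep : A.SeparatesPoints := by
    intro x y hxy
    have : ∃ i, (x : E3) i ≠ (y : E3) i := by
      by_contra hcon
      push Not at hcon
      exact hxy (Subtype.ext (by ext i; exact hcon i))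
    obtain ⟨i, hi⟩ := this
    exact ⟨_, ⟨cf i, Algebra.subset_adjoin ⟨i, rfl⟩, rfl⟩, hi⟩
  let hC : C(S, ℝ) := ⟨fun p => h p, hh.domRestrict⟩
  obtain ⟨g, hg⟩ := ContinuousMap.exists_mem_subalgebra_near_continuousMap_of_separatesPoints A hsep
    hC ε hε
  obtain ⟨f, hf, hfg⟩ := hA g g.2
  refine ⟨f, hf, fun p hp => ?_⟩
  have h1 := ContinuousMap.norm_coe_le_norm ((g : C(S, ℝ)) - hC) ⟨p, hp⟩
  simp only [ContinuousMap.coe_sub, Pi.sub_apply, Real.norm_eq_abs, hfg] at h1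
  exact h1.trans hg.le

open scoped Topology

lemma rX_inner (i : Fin 3) (n : E3) : rX i (fun y => ⟪n, y⟫) = fun y => ⟪n, rotB i y⟫ := by
  have := rX_lin i (innerSL ℝ n)
  simpa using this

lemma pol_inner (n : E3) : (fun y : E3 => (⟪n, y⟫ : ℝ)) ∈ Pol := by
  have := pol_lin (innerSL ℝ n).toLinearMap
  simpa using this

lemma rX_inner_rot (i : Fin 3) (n : E3) :
    rX i (fun y => ⟪n, rotB i y⟫) = fun y => ⟪n, rotB i (rotB i y)⟫ := by
  have := rX_lin i ((innerSL ℝ n) ∘L (rotB i))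
  simpa using this

lemma inner_E3 (x y : E3) : (⟪x, y⟫ : ℝ) = x 0 * y 0 + x 1 * y 1 + x 2 * y 2 := by
  simp [PiLp.inner_apply, Fin.sum_univ_three]
  ring

lemma aL_inner (n y : E3) : aL (fun y => ⟪n, y⟫) y = -2 * ⟪n, y⟫ := by
  simp only [aL, rX_inner, rX_inner_rot, Fin.sum_univ_three]
  simp only [inner_E3]
  simp [rotB_apply]
  ring

lemma aL_inner_sq (n y : E3) : aL ((fun y => ⟪n, y⟫) * (fun y => ⟪n, y⟫)) y
    = 2 * ‖n‖^2 * ‖y‖^2 - 6 * ⟪n, y⟫^2 := by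
  have h1 := pol_smooth (pol_inner n)
  have h2 : ∀ i, ContDiff ℝ (⊤ : ℕ∞) (fun y : E3 => (⟪n, rotB i y⟫ : ℝ)) := by
    intro i
    have := rX_contDiff i h1
    rwa [rX_inner] at this
  have h3 : ∀ i, rX i (rX i ((fun y => ⟪n, y⟫) * (fun y => ⟪n, y⟫))) y
     = 2 * ⟪n, rotB i y⟫^2 + 2 * ⟪n, y⟫ * ⟪n, rotB i (rotB i y)⟫ := by
    intro i
    rw [rX_mul i h1 h1, rX_inner, rX_add i (smooth_mul (h2 i) h1) (smooth_mul h1 (h2 i)),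
      rX_mul i (h2 i) h1, rX_mul i h1 (h2 i), rX_inner_rot, rX_inner]
    simp
    ring
  simp only [aL, h3, Fin.sum_univ_three]
  simp only [inner_E3, normsq_E3]
  simp [rotB_apply]
  ring

lemma inner_unit_le {n y : E3} (hn : ‖n‖ = 1) (hy : ‖y‖ = 1) : (⟪n, y⟫ : ℝ) ≤ 1 := by
  have := real_inner_le_norm n y
  rwa [hn, hy, mul_one] at this

lemma pol_lip_aux {f : E3 → ℝ} (hf : f ∈ Pol) {M : ℝ}
    (hM : ∀ p ∈ sphere (0:E3) 1, |aL f p| < M) {p q : E3} (hp : p ∈ sphere (0:E3) 1)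
    (hq : q ∈ sphere (0:E3) 1) (hpq : p ≠ q) : f p - f q ≤ 3/2 * M * ‖p - q‖ := by
  have hpn : ‖p‖ = 1 := by simpa using hp
  have hqn : ‖q‖ = 1 := by simpa using hq
  have hd : 0 < ‖p - q‖ := norm_pos_iff.2 (sub_ne_zero.2 hpq)
  have hM0 : 0 < M := (abs_nonneg _).trans_lt (hM p hp)
  set n : E3 := ‖p - q‖⁻¹ • (p - q) with hn
  have hnn : ‖n‖ = 1 := by
    rw [hn, norm_smul, norm_inv, norm_norm, inv_mul_cancel₀ hd.ne']
  set R : E3 ≃ₗᵢ[ℝ] E3 := (ℝ ∙ (p - q))ᗮ.reflection with hR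
  have hRp : R p = q := Submodule.reflection_sub (by rw [hpn, hqn])
  have hR0 : ∀ y : E3, (⟪n, y⟫ : ℝ) = 0 → R y = y := by
    intro y hy
    apply Submodule.reflection_mem_subspace_eq_self
    rw [Submodule.mem_orthogonal_singleton_iff_inner_right]
    rw [hn, real_inner_smul_left] at hy
    rcases mul_eq_zero.1 hy with h | h
    · exact absurd h (inv_ne_zero hd.ne')
    · exact h
  let z : E3 → ℝ := fun y => ⟪n, y⟫
  have hzP : z ∈ Pol := pol_inner n
  have hzS := pol_smooth hzP
  have hzzS : ContDiff ℝ (⊤ : ℕ∞) (z * z) := hzS.mul hzS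
  have hfS := pol_smooth hf
  have hfRS : ContDiff ℝ (⊤ : ℕ∞) (fun y => f (R y)) := contDiff_comp_iso R hfS
  let Q : E3 → ℝ := (f - (fun y => f (R y))) + ((-3 * M) • z + M • (z * z))
  have hQS : ContDiff ℝ (⊤ : ℕ∞) Q :=
    (hfS.sub hfRS).add ((smooth_smul _ hzS).add (smooth_smul _ hzzS))
  have hQL : ∀ y, aL Q y = aL f y - aL f (R y) + (6 * M * ⟪n, y⟫
      + M * (2 * ‖y‖^2 - 6 * ⟪n, y⟫^2)) := by
    intro y
    have e1 : aL Q = _ := aL_add (hfS.sub hfRS) ((smooth_smul _ hzS).add (smooth_smul _ hzzS))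
    rw [e1, aL_sub hfS hfRS, aL_add (smooth_smul _ hzS) (smooth_smul _ hzzS), aL_smul, aL_smul]
    simp only [Pi.add_apply, Pi.sub_apply, Pi.smul_apply, smul_eq_mul]
    rw [aL_comp_iso R hfS, aL_inner, aL_inner_sq, hnn]
    ring
  -- maximum on the hemisphere
  have hK : IsCompact (sphere (0:E3) 1 ∩ {y | 0 ≤ z y}) :=
    (isCompact_sphere (0:E3) 1).inter_right (isClosed_le continuous_const hzS.continuous)
  have hzp : z p = ‖p - q‖ / 2 := by
    have e1 : (⟪p - q, p⟫ : ℝ) = ‖p - q‖^2 / 2 := by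
      rw [@norm_sub_sq_real, hpn, hqn, inner_sub_left, real_inner_self_eq_norm_sq, hpn,
        real_inner_comm]
      ring
    simp only [z, hn, real_inner_smul_left, e1]
    field_simp
  have hpK : p ∈ sphere (0:E3) 1 ∩ {y | 0 ≤ z y} := ⟨hp, by simp only [mem_ofPred_eq, hzp]; positivity⟩
  obtain ⟨m, ⟨hmS, hmz⟩, hmax⟩ := hK.exists_isMaxOn ⟨p, hpK⟩ hQS.continuous.continuousOn
  have hmn : ‖m‖ = 1 := by simpa using hmS
  have hQm : Q m ≤ 0 := by
    rcases (show 0 ≤ z m from hmz).eq_or_lt with h0 | h0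
    · have : R m = m := hR0 m h0.symm
      simp [Q, this, ← h0]
    · exfalso
      have hle : aL Q m ≤ 0 := by
        apply aL_le_of_max (smooth_two hQS m)
        filter_upwards [hzS.continuous.continuousAt.eventually (lt_mem_nhds h0)] with y hy hyn
        exact hmax ⟨by simp [hyn, hmn], le_of_lt hy⟩
      rw [hQL, hmn] at hle
      have a1 := (abs_lt.1 (hM m hmS)).1
      have a2 := (abs_lt.1 (hM (R m) (by simp [hmn]))).2
      have a3 : z m ≤ 1 := inner_unit_le hnn hmn
      have a4 : 0 ≤ M * (z m * (1 - z m)) := by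
        have : 0 ≤ 1 - z m := by linarith
        positivity
      change _ + (6 * M * z m + M * (2 * 1^2 - 6 * z m^2)) ≤ 0 at hle
      nlinarith
  have hfin : Q p ≤ 0 := (hmax hpK).trans hQm
  simp only [Q, Pi.add_apply, Pi.sub_apply, Pi.smul_apply, Pi.mul_apply, smul_eq_mul, hRp, hzp]
    at hfin
  nlinarith [mul_pos hM0 (mul_pos hd hd)]

lemma pol_lip {f : E3 → ℝ} (hf : f ∈ Pol) {M : ℝ}
    (hM : ∀ p ∈ sphere (0:E3) 1, |aL f p| ≤ M) {p q : E3} (hp : p ∈ sphere (0:E3) 1)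
    (hq : q ∈ sphere (0:E3) 1) : |f p - f q| ≤ 3/2 * M * ‖p - q‖ := by
  by_cases hpq : p = q
  · simp [hpq]
  have hd : 0 < ‖p - q‖ := norm_pos_iff.2 (sub_ne_zero.2 hpq)
  have key : ∀ M' > M, |f p - f q| ≤ 3/2 * M' * ‖p - q‖ := by
    intro M' hM'
    have h1 := pol_lip_aux hf (fun p hp => (hM p hp).trans_lt hM') hp hq hpq
    have h2 := pol_lip_aux hf (fun p hp => (hM p hp).trans_lt hM') hq hp (Ne.symm hpq)
    rw [norm_sub_rev] at h2
    rw [abs_le]; constructor <;> linarith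
  have : |f p - f q| / (3/2 * ‖p - q‖) ≤ M := by
    apply le_of_forall_gt_imp_ge_of_dense
    intro M' hM'
    rw [div_le_iff₀ (by positivity)]
    linarith [key M' hM']
  rw [div_le_iff₀ (by positivity)] at this
  linarith

lemma rotR_dist (i : Fin 3) (t : ℝ) (p : E3) : ‖rotR i t p - p‖ ≤ ‖p‖ * |t| := by
  have := Convex.norm_image_sub_le_of_norm_hasDerivWithin_le (f := fun t => rotR i t p)
    (f' := fun t => rotB i (rotR i t p)) (s := Set.univ) (C := ‖p‖) (x := 0) (y := t)
    (fun x _ => (rotR_hasDerivAt i x p).hasDerivWithinAt)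
    (fun x _ => (rotB_norm_le i _).trans (rotR_norm i x p).le) convex_univ trivial trivial
  simpa [rotR_zero] using this

lemma pol_grad {f : E3 → ℝ} (hf : f ∈ Pol) {M : ℝ}
    (hM : ∀ p ∈ sphere (0:E3) 1, |aL f p| ≤ M) (i : Fin 3) {p : E3} (hp : p ∈ sphere (0:E3) 1) :
    |rX i f p| ≤ 3/2 * M := by
  have hpn : ‖p‖ = 1 := by simpa using hp
  have hM0 : 0 ≤ M := (abs_nonneg _).trans (hM p hp)
  have h := rX_deriv i p 0 (f := f) (smooth_diff (pol_smooth hf) _)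
  rw [rotR_zero] at h
  refine h.le_of_lip' (by positivity) (Eventually.of_forall fun t => ?_)
  rw [rotR_zero]
  refine (pol_lip hf hM (by simp [rotR_norm, hpn]) hp).trans ?_
  have := rotR_dist i t p
  rw [hpn, one_mul] at this
  simp only [sub_zero, Real.norm_eq_abs]
  gcongr

open scoped Topology

/-- degree zero homogeneous extension -/
def hx (u : E3 → ℝ) : E3 → ℝ := fun y => u (‖y‖⁻¹ • y)

/-- punctured space -/
def E0 : Set E3 := {x : E3 | x ≠ 0}

lemma E0_open : IsOpen E0 := isOpen_ne

lemma E0_of_sphere {p : E3} (hp : p ∈ sphere (0:E3) 1) : p ∈ E0 := by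
  rintro rfl
  simp at hp

lemma nrm_sphere {y : E3} (hy : y ∈ E0) : ‖y‖⁻¹ • y ∈ sphere (0:E3) 1 := by
  have : ‖y‖ ≠ 0 := norm_ne_zero_iff.2 hy
  simp [norm_smul, this]

lemma hx_sphere (u : E3 → ℝ) {p : E3} (hp : p ∈ sphere (0:E3) 1) : hx u p = u p := by
  have : ‖p‖ = 1 := by simpa using hp
  simp [hx, this]

lemma nrm_contDiffAt {y : E3} (hy : y ∈ E0) {n : WithTop ℕ∞} :
    ContDiffAt ℝ n (fun y : E3 => ‖y‖⁻¹ • y) y :=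
  ((contDiffAt_norm ℝ hy).inv (norm_ne_zero_iff.2 hy)).smul contDiffAt_id

lemma hx_pol {f : E3 → ℝ} (hf : ContDiff ℝ (⊤ : ℕ∞) f) {y : E3} (hy : y ∈ E0) :
    ContDiffAt ℝ (⊤ : ℕ∞) (hx f) y :=
  ContDiffAt.comp y hf.contDiffAt (nrm_contDiffAt hy)

lemma hx_rot (u : E3 → ℝ) (i : Fin 3) (t : ℝ) (y : E3) :
    hx u (rotR i t y) = u (rotR i t (‖y‖⁻¹ • y)) := by
  rw [hx, rotR_norm, map_smul]

lemma hx_smul (u : E3 → ℝ) {a : ℝ} (ha : 0 < a) (y : E3) : hx u (a • y) = hx u y := by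
  simp only [hx, norm_smul, Real.norm_eq_abs, abs_of_pos ha, smul_smul]
  congr 2
  field_simp

lemma hx_euler (u : E3 → ℝ) {y : E3} (hd : DifferentiableAt ℝ (hx u) y) :
    fderiv ℝ (hx u) y y = 0 := by
  have h1 : HasDerivAt (fun a : ℝ => a • y) y 1 := by
    simpa using (hasDerivAt_id (1:ℝ)).smul_const y
  have h2 : HasDerivAt (fun a : ℝ => hx u (a • y)) (fderiv ℝ (hx u) y y) 1 := by
    have hd' : HasFDerivAt (hx u) (fderiv ℝ (hx u) y) ((1:ℝ) • y) := by
      rw [one_smul]; exact hd.hasFDerivAt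
    exact HasFDerivAt.comp_hasDerivAt (l := hx u) (f := fun a : ℝ => a • y) (1:ℝ) hd' h1
  have h3 : (fun a : ℝ => hx u (a • y)) =ᶠ[𝓝 1] fun _ => hx u y := by
    filter_upwards [lt_mem_nhds (show (0:ℝ) < 1 by norm_num)] with a ha using hx_smul u ha y
  rw [← h2.deriv, h3.deriv_eq]; simp

/-- the covector `v ↦ ⟪e_i × y, v⟫ / |y|²` -/
def aform (i : Fin 3) (y : E3) : E3 →L[ℝ] ℝ := (‖y‖^2)⁻¹ • innerSL ℝ (rotB i y)

lemma aform_apply (i : Fin 3) (y v : E3) : aform i y v = (‖y‖^2)⁻¹ * ⟪rotB i y, v⟫ := by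
  simp [aform]

lemma recon (d : E3 →L[ℝ] ℝ) {y : E3} (hy : y ∈ E0) (hd : d y = 0) :
    d = ∑ i : Fin 3, d (rotB i y) • aform i y := by
  ext v
  have hy' : ‖y‖^2 ≠ 0 := pow_ne_zero _ (norm_ne_zero_iff.2 hy)
  have key : ∑ i : Fin 3, d (rotB i y) * ⟪rotB i y, v⟫ = ‖y‖^2 * d v - ⟪y, v⟫ * d y := by
    rw [congrArg d (E3_decomp y), congrArg d (E3_decomp v)]
    simp only [Fin.sum_univ_three]
    simp only [inner_E3, normsq_E3]
    simp [rotB_apply]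
    ring
  rw [hd, mul_zero, sub_zero] at key
  have : (∑ i : Fin 3, d (rotB i y) • aform i y) v
      = (‖y‖^2)⁻¹ * ∑ i : Fin 3, d (rotB i y) * ⟪rotB i y, v⟫ := by
    simp only [_root_.sum_apply, _root_.smul_apply, aform_apply,
      Finset.mul_sum, smul_eq_mul]
    refine Finset.sum_congr rfl fun i _ => by ring
  rw [this, key, inv_mul_cancel_left₀ hy']

lemma hx_hasFDerivAt (u : E3 → ℝ) {y : E3} (hy : y ∈ E0) (hd : DifferentiableAt ℝ (hx u) y) :
    HasFDerivAt (hx u) (∑ i : Fin 3, rX i (hx u) y • aform i y) y := by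
  have := recon (fderiv ℝ (hx u) y) hy (hx_euler u hd)
  have h2 := hd.hasFDerivAt
  rw [this] at h2
  exact h2

lemma aform_contDiffAt (i : Fin 3) {y : E3} (hy : y ∈ E0) {n : WithTop ℕ∞} :
    ContDiffAt ℝ n (aform i) y := by
  have h1 : ContDiffAt ℝ n (fun y : E3 => (‖y‖^2)⁻¹) y :=
    ((contDiffAt_norm ℝ hy).pow 2).inv (pow_ne_zero _ (norm_ne_zero_iff.2 hy))
  have h2 : ContDiffAt ℝ n (fun y : E3 => innerSL ℝ (rotB i y)) y :=
    ((innerSL ℝ (E := E3)).contDiff.comp (rotB i).contDiff).contDiffAt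
  exact h1.smul h2

lemma aform_norm (i : Fin 3) {y : E3} (hy : y ∈ E0) : ‖aform i y‖ ≤ ‖y‖⁻¹ := by
  have hy' : 0 < ‖y‖ := norm_pos_iff.2 hy
  rw [aform, norm_smul, innerSL_apply_norm, norm_inv, norm_pow, norm_norm]
  calc (‖y‖^2)⁻¹ * ‖rotB i y‖ ≤ (‖y‖^2)⁻¹ * ‖y‖ := by gcongr; exact rotB_norm_le i y
    _ = ‖y‖⁻¹ := by field_simp

/-- rotational derivatives of a homogeneous extension are homogeneous extensions -/
lemma rX_hx (u f : E3 → ℝ) (i : Fin 3) {y : E3} (hd : DifferentiableAt ℝ (hx u) y)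
    (hf : DifferentiableAt ℝ f (‖y‖⁻¹ • y))
    (hfu : ∀ q ∈ sphere (0:E3) 1, f q = u q) (hy : y ∈ E0) :
    rX i (hx u) y = rX i f (‖y‖⁻¹ • y) := by
  have h1 := rX_deriv i y 0 (f := hx u) (by rwa [rotR_zero])
  have h2 := rX_deriv i (‖y‖⁻¹ • y) 0 (f := f) (by rwa [rotR_zero])
  rw [rotR_zero] at h1 h2
  have h3 : (fun t => hx u (rotR i t y)) = fun t => f (rotR i t (‖y‖⁻¹ • y)) := by
    funext t
    rw [hx_rot, hfu]
    have := nrm_sphere hy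
    simp only [mem_sphere_iff_norm, sub_zero] at this ⊢
    rw [rotR_norm, this]
  rw [h3] at h1
  exact h1.unique h2

lemma hx_rX_hx (u : E3 → ℝ) (i : Fin 3) (hd : ∀ y ∈ E0, DifferentiableAt ℝ (hx u) y)
    {y : E3} (hy : y ∈ E0) : hx (rX i (hx u)) y = rX i (hx u) y := by
  rw [rX_hx u (hx u) i (hd y hy) (hd _ (E0_of_sphere (nrm_sphere hy)))
    (fun q hq => hx_sphere u hq) hy]
  rfl

lemma contDiffAt_of_on {f : E3 → ℝ} {n : WithTop ℕ∞} (h : ContDiffOn ℝ n f E0) {y : E3}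
    (hy : y ∈ E0) : ContDiffAt ℝ n f y := h.contDiffAt (E0_open.mem_nhds hy)

lemma sphLap_eq (u : E3 → ℝ) (hu : ContDiffOn ℝ 2 (hx u) E0) {p : E3}
    (hp : p ∈ sphere (0:E3) 1) : sphLap u p = aL (hx u) p := by
  have hpn : ‖p‖ = 1 := by simpa using hp
  have hp0 := E0_of_sphere hp
  have hc : ContDiffAt ℝ 2 (hx u) p := contDiffAt_of_on hu hp0
  have hD : ∀ y ∈ E0, fderiv ℝ (hx u) y y = 0 := fun y hy =>
    hx_euler u ((contDiffAt_of_on hu hy).differentiableAt (by norm_num))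
  have h2 : fderiv ℝ (fderiv ℝ (hx u)) p p p = 0 := by
    have h1 : DifferentiableAt ℝ (fderiv ℝ (hx u)) p :=
      (hc.fderiv_right (m := 1) (by norm_num)).differentiableAt (by norm_num)
    have e := h1.hasFDerivAt.clm_apply (hasFDerivAt_id p)
    have e2 : (fun y => fderiv ℝ (hx u) y (id y)) =ᶠ[𝓝 p] fun _ => (0:ℝ) := by
      filter_upwards [E0_open.mem_nhds hp0] with y hy using hD y hy
    have e3 := e.fderiv
    rw [e2.fderiv_eq] at e3
    have e4 := congrArg (fun l : E3 →L[ℝ] ℝ => l p) e3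
    simp [hD p hp0] at e4
    exact e4.symm
  rw [aL_formula hc, hpn, h2, hD p hp0]
  simp [sphLap]
  rfl

open scoped Topology

/-- `u` is a (strong-limit) solution of `c u - L u = h` on the unit sphere -/
def Res (c : ℝ) (h u : E3 → ℝ) : Prop :=
  ∀ ε > 0, ∃ f ∈ Pol, ∀ p ∈ sphere (0:E3) 1, |f p - u p| ≤ ε ∧ |c * f p - aL f p - h p| ≤ ε

lemma Res_congr {c : ℝ} {h u h' u' : E3 → ℝ} (H : Res c h u)
    (hh : ∀ p ∈ sphere (0:E3) 1, h p = h' p) (hu : ∀ p ∈ sphere (0:E3) 1, u p = u' p) :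
    Res c h' u' := by
  intro ε hε
  obtain ⟨f, hf, hb⟩ := H ε hε
  refine ⟨f, hf, fun p hp => ?_⟩
  rw [← hh p hp, ← hu p hp]
  exact hb p hp

lemma Res_sub {c : ℝ} {h u h' u' : E3 → ℝ} (H : Res c h u) (H' : Res c h' u') :
    Res c (h - h') (u - u') := by
  intro ε hε
  obtain ⟨f, hf, hb⟩ := H (ε/2) (by positivity)
  obtain ⟨f', hf', hb'⟩ := H' (ε/2) (by positivity)
  refine ⟨f - f', Pol.sub_mem hf hf', fun p hp => ?_⟩
  rw [aL_sub (pol_smooth hf) (pol_smooth hf')]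
  obtain ⟨h1, h2⟩ := hb p hp
  obtain ⟨h3, h4⟩ := hb' p hp
  simp only [Pi.sub_apply]
  simp only [abs_le] at *
  constructor <;> constructor <;> linarith [h1.1, h1.2, h2.1, h2.2, h3.1, h3.2, h4.1, h4.2]

lemma Res_smul {c : ℝ} {h u : E3 → ℝ} (H : Res c h u) (a : ℝ) : Res c (a • h) (a • u) := by
  intro ε hε
  obtain ⟨f, hf, hb⟩ := H (ε/(|a|+1)) (by positivity)
  have hle : |a| * (ε/(|a|+1)) ≤ ε := by
    rw [mul_div_assoc', div_le_iff₀ (by positivity)]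
    nlinarith [abs_nonneg a]
  refine ⟨a • f, Pol.smul_mem hf a, fun p hp => ?_⟩
  obtain ⟨h1, h2⟩ := hb p hp
  rw [aL_smul]
  simp only [Pi.smul_apply, smul_eq_mul]
  constructor
  · rw [← mul_sub, abs_mul]
    exact (mul_le_mul_of_nonneg_left h1 (abs_nonneg a)).trans hle
  · rw [show c * (a * f p) - a * aL f p - a * h p = a * (c * f p - aL f p - h p) by ring, abs_mul]
    exact (mul_le_mul_of_nonneg_left h2 (abs_nonneg a)).trans hle

lemma Res_pol {c : ℝ} {f : E3 → ℝ} (hf : f ∈ Pol) : Res c (fun y => c * f y - aL f y) f := by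
  intro ε hε
  exact ⟨f, hf, fun p _ => by simp [hε.le]⟩

lemma iso_sphere (R : E3 ≃ₗᵢ[ℝ] E3) {p : E3} (hp : p ∈ sphere (0:E3) 1) :
    R p ∈ sphere (0:E3) 1 := by
  have : ‖p‖ = 1 := by simpa using hp
  simp [this]

lemma rot_sphere (i : Fin 3) (t : ℝ) {p : E3} (hp : p ∈ sphere (0:E3) 1) :
    rotR i t p ∈ sphere (0:E3) 1 := iso_sphere (rotE i t) hp

lemma Res_comp_iso {c : ℝ} {h u : E3 → ℝ} (H : Res c h u) (R : E3 ≃ₗᵢ[ℝ] E3) :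
    Res c (fun y => h (R y)) (fun y => u (R y)) := by
  intro ε hε
  obtain ⟨f, hf, hb⟩ := H ε hε
  refine ⟨fun y => f (R y), pol_comp_iso R hf, fun p hp => ?_⟩
  rw [aL_comp_iso R (pol_smooth hf)]
  exact hb _ (iso_sphere R hp)

lemma Res_max {c M : ℝ} (hc : 0 < c) {h u : E3 → ℝ} (H : Res c h u)
    (hM : ∀ p ∈ sphere (0:E3) 1, h p ≤ M) : ∀ p ∈ sphere (0:E3) 1, c * u p ≤ M := by
  intro p hp
  refine le_of_forall_pos_le_add fun ε hε => ?_
  obtain ⟨f, hf, hb⟩ := H (ε/(1+c)) (by positivity)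
  have h1 := max_principle (M := M + ε/(1+c)) (zero_le_one) hc (pol_smooth hf) (fun q hq => by
    have := (abs_le.1 (hb q hq).2).2
    linarith [hM q hq]) p hp
  have h2 := (abs_le.1 (hb p hp).1).1
  have h3 : c * (u p) ≤ c * (f p + ε/(1+c)) := by gcongr; linarith
  have h4 : c * (ε/(1+c)) + ε/(1+c) = ε := by field_simp; ring
  linarith

lemma Res_abs {c M : ℝ} (hc : 0 < c) {h u : E3 → ℝ} (H : Res c h u)
    (hM : ∀ p ∈ sphere (0:E3) 1, |h p| ≤ M) : ∀ p ∈ sphere (0:E3) 1, c * |u p| ≤ M := by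
  intro p hp
  have h1 := Res_max hc H (fun p hp => (abs_le.1 (hM p hp)).2) p hp
  have h2 := Res_max (M := M) hc (Res_smul H (-1)) (fun p hp => by
    simp only [Pi.smul_apply, smul_eq_mul]; linarith [(abs_le.1 (hM p hp)).1]) p hp
  simp only [Pi.smul_apply, smul_eq_mul] at h2
  rcases abs_cases (u p) with h | h <;> rw [h.1] <;> linarith

/-- uniform Cauchy sequences on the sphere converge with rate -/
lemma cauchy_lim {F : ℕ → E3 → ℝ} {K : ℝ} (hF : ∀ N n m, N ≤ n → N ≤ m → ∀ p ∈ sphere (0:E3) 1,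
    |F n p - F m p| ≤ K * (1/((N:ℝ)+1))) :
    ∃ u : E3 → ℝ, ∀ n, ∀ p ∈ sphere (0:E3) 1, |F n p - u p| ≤ K * (1/((n:ℝ)+1)) := by
  have hlim : Tendsto (fun N : ℕ => K * (1/((N:ℝ)+1))) atTop (𝓝 0) := by
    simpa using tendsto_one_div_add_atTop_nhds_zero_nat.const_mul K
  have hex : ∀ p : E3, ∃ l : ℝ, p ∈ sphere (0:E3) 1 → Tendsto (fun n => F n p) atTop (𝓝 l) := by
    intro p
    by_cases hp : p ∈ sphere (0:E3) 1
    · have hC : CauchySeq (fun n => F n p) :=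
        cauchySeq_of_le_tendsto_0 _ (fun n m N hn hm => hF N n m hn hm p hp) hlim
      obtain ⟨l, hl⟩ := cauchySeq_tendsto_of_complete hC
      exact ⟨l, fun _ => hl⟩
    · exact ⟨0, fun h => absurd h hp⟩
  choose u hu using hex
  refine ⟨u, fun n p hp => ?_⟩
  have h1 : Tendsto (fun m => |F n p - F m p|) atTop (𝓝 |F n p - u p|) :=
    (tendsto_const_nhds.sub (hu p hp)).abs
  exact le_of_tendsto h1 (eventually_atTop.2 ⟨n, fun m hm => hF n n m le_rfl hm p hp⟩)

lemma inv_anti {N n : ℕ} (h : N ≤ n) : 1/((n:ℝ)+1) ≤ 1/((N:ℝ)+1) := by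
  have : (N:ℝ) ≤ n := by exact_mod_cast h
  gcongr

lemma eps_small {K ε : ℝ} (hε : 0 < ε) : ∃ n : ℕ, K * (1/((n:ℝ)+1)) ≤ ε := by
  have hlim : Tendsto (fun N : ℕ => K * (1/((N:ℝ)+1))) atTop (𝓝 0) := by
    simpa using tendsto_one_div_add_atTop_nhds_zero_nat.const_mul K
  obtain ⟨n, hn⟩ := ((tendsto_order.1 hlim).2 ε hε).exists
  exact ⟨n, hn.le⟩

lemma Res_exists {c : ℝ} (hc : 0 < c) {h : E3 → ℝ} (hh : ContinuousOn h (sphere (0:E3) 1)) :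
    ∃ u, Res c h u := by
  have key : ∀ n : ℕ, ∃ f ∈ Pol, ∀ p ∈ sphere (0:E3) 1, |c * f p - aL f p - h p| ≤ 1/((n:ℝ)+1) := by
    intro n
    obtain ⟨g, hg, hgb⟩ := pol_dense hh (ε := 1/((n:ℝ)+1)) (by positivity)
    obtain ⟨f, hf, hfe⟩ := pol_solve hc hg
    exact ⟨f, hf, fun p hp => by rw [hfe]; exact hgb p hp⟩
  choose F hF hFb using key
  obtain ⟨u, hu⟩ := cauchy_lim (F := F) (K := 2/c) (fun N n m hn hm p hp => by
    have := max_principle_abs (M := 2 * (1/((N:ℝ)+1))) zero_le_one hc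
      ((pol_smooth (Pol.sub_mem (hF n) (hF m)))) (fun q hq => by
        rw [aL_sub (pol_smooth (hF n)) (pol_smooth (hF m))]
        have h1 := abs_le.1 ((hFb n q hq).trans (inv_anti hn))
        have h2 := abs_le.1 ((hFb m q hq).trans (inv_anti hm))
        simp only [Pi.sub_apply]
        rw [abs_le]
        constructor <;> linarith [h1.1, h1.2, h2.1, h2.2]) p hp
    rw [div_mul_eq_mul_div, le_div_iff₀ hc, mul_comm]
    exact this)
  refine ⟨u, fun ε hε => ?_⟩
  obtain ⟨n, hn⟩ := eps_small (K := 2/c + 1) hε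
  have hp1 : 0 ≤ 1/((n:ℝ)+1) := by positivity
  have hp2 : 0 ≤ 2/c * (1/((n:ℝ)+1)) := by positivity
  exact ⟨F n, hF n, fun p hp => ⟨(hu n p hp).trans (by linarith), (hFb n p hp).trans (by linarith)⟩⟩

lemma Res_C1 {c : ℝ} (hc : 0 < c) {h u : E3 → ℝ} (H : Res c h u) : ContDiffOn ℝ 1 (hx u) E0 := by
  have key := fun n : ℕ => H (1/((n:ℝ)+1)) (by positivity)
  choose F hF hFb using key
  have hs := fun n => pol_smooth (hF n)
  have hgr : ∀ i : Fin 3, ∃ w : E3 → ℝ, ∀ n, ∀ p ∈ sphere (0:E3) 1,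
      |rX i (F n) p - w p| ≤ (3 * (c+1)) * (1/((n:ℝ)+1)) := by
    intro i
    refine cauchy_lim (F := fun n => rX i (F n)) (fun N n m hn hm p hp => ?_)
    have := pol_grad (Pol.sub_mem (hF n) (hF m)) (M := 2 * (c+1) * (1/((N:ℝ)+1))) (fun q hq => by
        rw [aL_sub (hs n) (hs m)]
        have h1 := abs_le.1 ((hFb n q hq).2.trans (inv_anti hn))
        have h2 := abs_le.1 ((hFb m q hq).2.trans (inv_anti hm))
        have h3 := abs_le.1 ((hFb n q hq).1.trans (inv_anti hn))
        have h4 := abs_le.1 ((hFb m q hq).1.trans (inv_anti hm))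
        have h5 : |c * (F n q - F m q)| ≤ c * (2 * (1/((N:ℝ)+1))) := by
          rw [abs_mul, abs_of_pos hc]
          gcongr
          rw [abs_le]; constructor <;> linarith [h3.1, h3.2, h4.1, h4.2]
        rw [abs_le] at h5
        simp only [Pi.sub_apply]
        rw [abs_le]
        constructor <;> linarith [h1.1, h1.2, h2.1, h2.2, h5.1, h5.2]) i hp
    have e : F n - F m = F n + (-1:ℝ) • F m := by funext y; simp; ring
    rw [e, rX_add i (hs n) (smooth_smul _ (hs m)), rX_smul] at this
    simp only [Pi.add_apply, Pi.smul_apply, smul_eq_mul] at this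
    calc |rX i (F n) p - rX i (F m) p| = |rX i (F n) p + -1 * rX i (F m) p| := by ring_nf
      _ ≤ _ := this
      _ = _ := by ring
  choose w hw using hgr
  -- derivative candidates
  let D : E3 → E3 →L[ℝ] ℝ := fun y => ∑ i : Fin 3, w i (‖y‖⁻¹ • y) • aform i y
  let Dn : ℕ → E3 → E3 →L[ℝ] ℝ := fun n y => ∑ i : Fin 3, rX i (F n) (‖y‖⁻¹ • y) • aform i y
  have hDn : ∀ n, ∀ y ∈ E0, HasFDerivAt (hx (F n)) (Dn n y) y := by
    intro n y hy
    have hd : DifferentiableAt ℝ (hx (F n)) y := (hx_pol (hs n) hy).differentiableAt (by simp)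
    have := hx_hasFDerivAt (F n) hy hd
    have e : ∀ i, rX i (hx (F n)) y = rX i (F n) (‖y‖⁻¹ • y) := fun i =>
      rX_hx (F n) (F n) i hd (smooth_diff (hs n) _) (fun _ _ => rfl) hy
    simp only [e] at this
    exact this
  have hDnc : ∀ n, ContinuousOn (Dn n) E0 := by
    intro n y hy
    refine ContinuousAt.continuousWithinAt ?_
    refine tendsto_finsetSum _ fun i _ => ?_
    have a1 : ContinuousAt (fun y : E3 => rX i (F n) (‖y‖⁻¹ • y)) y :=
      ContinuousAt.comp (f := fun y : E3 => ‖y‖⁻¹ • y) (rX_contDiff i (hs n)).continuous.continuousAt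
        (nrm_contDiffAt (n := 0) hy).continuousAt
    exact a1.smul (aform_contDiffAt (n := 0) i hy).continuousAt
  have hunif : ∀ r > 0, TendstoUniformlyOn Dn D atTop {y : E3 | r < ‖y‖} := by
    intro r hr
    rw [Metric.tendstoUniformlyOn_iff]
    intro ε hε
    have hlim : Tendsto (fun N : ℕ => (9 * (c+1) / r) * (1/((N:ℝ)+1))) atTop (𝓝 0) := by
      simpa using tendsto_one_div_add_atTop_nhds_zero_nat.const_mul (9 * (c+1) / r)
    filter_upwards [(tendsto_order.1 hlim).2 ε hε] with n hn y hy
    have hyr : r < ‖y‖ := hy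
    have hy0 : y ∈ E0 := norm_pos_iff.1 (hr.trans hyr)
    refine lt_of_le_of_lt ?_ hn
    rw [dist_eq_norm]
    have e : D y - Dn n y = ∑ i : Fin 3, (w i (‖y‖⁻¹ • y) - rX i (F n) (‖y‖⁻¹ • y)) • aform i y := by
      simp only [D, Dn, ← Finset.sum_sub_distrib]
      exact Finset.sum_congr rfl fun i _ => (sub_smul _ _ _).symm
    rw [e]
    calc ‖∑ i : Fin 3, (w i (‖y‖⁻¹ • y) - rX i (F n) (‖y‖⁻¹ • y)) • aform i y‖
        ≤ ∑ i : Fin 3, (3 * (c+1)) * (1/((n:ℝ)+1)) * r⁻¹ := by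
          refine norm_sum_le_of_le _ fun i _ => ?_
          rw [norm_smul, Real.norm_eq_abs, abs_sub_comm]
          have b1 := hw i n _ (nrm_sphere hy0)
          have b2 : ‖aform i y‖ ≤ r⁻¹ := (aform_norm i hy0).trans (by gcongr)
          gcongr
      _ = _ := by simp; ring
  have hfd : ∀ y ∈ E0, HasFDerivAt (hx u) (D y) y := by
    intro y hy
    have hyp : 0 < ‖y‖ := norm_pos_iff.2 hy
    have hop : IsOpen {z : E3 | ‖y‖/2 < ‖z‖} := isOpen_lt continuous_const continuous_norm
    have hsub : ∀ z ∈ {z : E3 | ‖y‖/2 < ‖z‖}, z ∈ E0 := fun z hz =>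
      norm_pos_iff.1 (lt_trans (by positivity) hz)
    refine hasFDerivAt_of_tendstoUniformlyOn hop (hunif (‖y‖/2) (by positivity))
      (fun n z hz => hDn n z (hsub z hz)) (fun z hz => ?_) (show ‖y‖/2 < ‖y‖ by linarith)
    have hl : Tendsto (fun N : ℕ => (1/((N:ℝ)+1))) atTop (𝓝 0) :=
      tendsto_one_div_add_atTop_nhds_zero_nat
    exact tendsto_iff_dist_tendsto_zero.2 (squeeze_zero (fun _ => dist_nonneg)
      (fun n => (hFb n _ (nrm_sphere (hsub z hz))).1) hl)
  have hDc : ContinuousOn D E0 := by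
    intro y hy
    have hyp : 0 < ‖y‖ := norm_pos_iff.2 hy
    have hop : IsOpen {z : E3 | ‖y‖/2 < ‖z‖} := isOpen_lt continuous_const continuous_norm
    have hsub : {z : E3 | ‖y‖/2 < ‖z‖} ⊆ E0 := fun z hz =>
      norm_pos_iff.1 (lt_trans (by positivity) hz)
    have := (hunif (‖y‖/2) (by positivity)).continuousOn
      (Eventually.of_forall fun n => (hDnc n).mono hsub).frequently
    exact (this.continuousAt (hop.mem_nhds (show ‖y‖/2 < ‖y‖ by linarith))).continuousWithinAt
  rw [show (1 : WithTop ℕ∞) = 0 + 1 from rfl, contDiffOn_succ_iff_fderiv_of_isOpen E0_open]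
  refine ⟨fun y hy => (hfd y hy).differentiableAt.differentiableWithinAt, by simp, ?_⟩
  rw [contDiffOn_zero]
  exact hDc.congr fun y hy => (hfd y hy).fderiv

open scoped Topology

lemma sphere_sub_E0 : sphere (0:E3) 1 ⊆ E0 := fun _ hp => E0_of_sphere hp

lemma rX_continuousOn {f : E3 → ℝ} (hf : ContDiffOn ℝ 1 f E0) (i : Fin 3) :
    ContinuousOn (rX i f) E0 := fun _ hy =>
  (rX_contDiffAt (m := 0) i (contDiffAt_of_on hf hy) (by norm_num)).continuousAt.continuousWithinAt

lemma continuousOn_of_hx {u : E3 → ℝ} (hu : ContinuousOn (hx u) E0) :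
    ContinuousOn u (sphere (0:E3) 1) :=
  (hu.mono sphere_sub_E0).congr fun _ hp => (hx_sphere u hp).symm

lemma Res_X {c : ℝ} (hc : 0 < c) {h u : E3 → ℝ} (H : Res c h u) (hh : ContDiffOn ℝ 1 (hx h) E0)
    (i : Fin 3) : Res c (rX i (hx h)) (rX i (hx u)) := by
  have hkc : ContinuousOn (rX i (hx h)) (sphere (0:E3) 1) := (rX_continuousOn hh i).mono sphere_sub_E0
  obtain ⟨w, hw⟩ := Res_exists hc hkc
  have hu := Res_C1 hc H
  refine Res_congr hw (fun _ _ => rfl) fun p hp => ?_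
  have huc := (isCompact_sphere (0:E3) 1).uniformContinuousOn_of_continuous hkc
  rw [Metric.uniformContinuousOn_iff] at huc
  have hder : ∀ q ∈ sphere (0:E3) 1, ∀ t,
      HasDerivAt (fun t => hx h (rotR i t q)) (rX i (hx h) (rotR i t q)) t := fun q hq t =>
    rX_deriv i q t ((contDiffAt_of_on hh (E0_of_sphere (rot_sphere i t hq))).differentiableAt
      (by norm_num))
  have h1 : HasDerivAt (fun t => hx u (rotR i t p)) (w p) 0 := by
    rw [hasDerivAt_iff_tendsto_slope_zero, Metric.tendsto_nhdsWithin_nhds]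
    intro ε hε
    obtain ⟨η, hη, hb⟩ := huc (c * (ε/2)) (by positivity)
    refine ⟨η, hη, fun t ht0 htη => ?_⟩
    have ht0 : t ≠ 0 := ht0
    rw [dist_zero_right] at htη
    have hR := Res_sub (Res_smul (Res_sub (Res_comp_iso H (rotE i t)) H) t⁻¹) hw
    have hbd : ∀ q ∈ sphere (0:E3) 1,
        |(t⁻¹ • ((fun y => h (rotE i t y)) - h) - rX i (hx h)) q| ≤ c * (ε/2) := by
      intro q hq
      have mv := Convex.norm_image_sub_le_of_norm_hasDerivWithin_le
        (f := fun s => hx h (rotR i s q) - s * rX i (hx h) q)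
        (f' := fun s => rX i (hx h) (rotR i s q) - 1 * rX i (hx h) q) (s := ball (0:ℝ) η)
        (C := c * (ε/2)) (x := 0) (y := t)
        (fun s _ => ((hder q hq s).sub ((hasDerivAt_id s).mul_const _)).hasDerivWithinAt)
        (fun s hs => by
          have hs' : |s| < η := by simpa using hs
          have hqn : ‖q‖ = 1 := by simpa using hq
          rw [one_mul, ← dist_eq_norm]
          refine (hb _ (rot_sphere i s hq) _ hq ?_).le
          rw [dist_eq_norm]
          have := rotR_dist i s q
          rw [hqn, one_mul] at this
          linarith) (convex_ball _ _) (mem_ball_self hη) (by simpa using htη)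
      simp only [rotR_zero, hx_sphere h hq, hx_sphere h (rot_sphere i t hq), zero_mul, sub_zero,
        Real.norm_eq_abs] at mv
      simp only [Pi.sub_apply, Pi.smul_apply, smul_eq_mul, rotE_apply]
      have e : t⁻¹ * (h (rotR i t q) - h q) - rX i (hx h) q
          = t⁻¹ * (h (rotR i t q) - t * rX i (hx h) q - h q) := by field_simp; ring
      rw [e, abs_mul, abs_inv]
      rw [inv_mul_le_iff₀ (abs_pos.2 ht0)]
      linarith
    have := Res_abs hc hR hbd p hp
    have h5 := le_of_mul_le_mul_left this hc
    simp only [Pi.sub_apply, Pi.smul_apply, smul_eq_mul, rotE_apply] at h5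
    rw [Real.dist_eq, zero_add, rotR_zero, smul_eq_mul, hx_sphere u hp,
      hx_sphere u (rot_sphere i t hp)]
    linarith
  have h2 := rX_deriv i p 0 (f := hx u) (by
    rw [rotR_zero]
    exact (contDiffAt_of_on hu (E0_of_sphere hp)).differentiableAt (by norm_num))
  rw [rotR_zero] at h2
  exact h1.unique h2

lemma Res_smooth {c : ℝ} (hc : 0 < c) (k : ℕ) : ∀ {h u : E3 → ℝ}, Res c h u →
    ContDiffOn ℝ k (hx h) E0 → ContDiffOn ℝ (k+1) (hx u) E0 := by
  induction k with
  | zero => intro h u H _; simpa using Res_C1 hc H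
  | succ k ih =>
    intro h u H hh
    have hh1 : ContDiffOn ℝ 1 (hx h) E0 := hh.of_le (by push_cast; exact le_add_self)
    have hu1 := Res_C1 hc H
    have hud : ∀ y ∈ E0, DifferentiableAt ℝ (hx u) y := fun y hy =>
      (contDiffAt_of_on hu1 hy).differentiableAt (by norm_num)
    have hhd : ∀ y ∈ E0, DifferentiableAt ℝ (hx h) y := fun y hy =>
      (contDiffAt_of_on hh1 hy).differentiableAt (by norm_num)
    have hX : ∀ i, ContDiffOn ℝ (k+1) (rX i (hx u)) E0 := by
      intro i
      have h1 : ContDiffOn ℝ k (hx (rX i (hx h))) E0 := by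
        have : ContDiffOn ℝ k (rX i (hx h)) E0 := fun y hy =>
          (rX_contDiffAt i (contDiffAt_of_on hh hy) (by push_cast; exact le_rfl)).contDiffWithinAt
        exact this.congr fun y hy => hx_rX_hx h i hhd hy
      exact (ih (Res_X hc H hh1 i) h1).congr fun y hy => (hx_rX_hx u i hud hy).symm
    rw [contDiffOn_succ_iff_fderiv_of_isOpen E0_open]
    refine ⟨fun y hy => (hud y hy).differentiableWithinAt, by simp, ?_⟩
    have : ContDiffOn ℝ ((k+1 : ℕ) : WithTop ℕ∞) (fun y => ∑ i : Fin 3, rX i (hx u) y • aform i y) E0 := by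
      refine ContDiffOn.sum fun i _ => ?_
      have h1 : ContDiffOn ℝ ((k+1 : ℕ) : WithTop ℕ∞) (rX i (hx u)) E0 := by
        push_cast; exact hX i
      exact h1.smul fun y hy => (aform_contDiffAt i hy).contDiffWithinAt
    exact this.congr fun y hy => (hx_hasFDerivAt u hy (hud y hy)).fderiv

lemma aL_sub_at {f g : E3 → ℝ} {y : E3} (hf : ContDiffAt ℝ 2 f y) (hg : ContDiffAt ℝ 2 g y) :
    aL (f - g) y = aL f y - aL g y := by
  have hX : ∀ i, rX i (rX i (f - g)) y = rX i (rX i f) y - rX i (rX i g) y := by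
    intro i
    have e : rX i (f - g) =ᶠ[𝓝 y] rX i f - rX i g := by
      filter_upwards [hf.eventually (by simp), hg.eventually (by simp)] with z h1 h2
      have d1 := h1.differentiableAt (by norm_num)
      have d2 := h2.differentiableAt (by norm_num)
      simp [rX, fderiv_sub d1 d2]
    have d1 := (rX_contDiffAt (m := 1) i hf (by norm_num)).differentiableAt (by norm_num)
    have d2 := (rX_contDiffAt (m := 1) i hg (by norm_num)).differentiableAt (by norm_num)
    rw [rX, e.fderiv_eq, fderiv_sub d1 d2]
    rfl
  simp [aL, hX, Finset.sum_sub_distrib]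

lemma aL_continuousOn {f : E3 → ℝ} (hf : ContDiffOn ℝ 2 f E0) : ContinuousOn (aL f) E0 := by
  intro y hy
  refine ContinuousAt.continuousWithinAt (tendsto_finsetSum _ fun i _ => ?_)
  exact (rX_contDiffAt (m := 0) i (rX_contDiffAt (m := 1) i (contDiffAt_of_on hf hy)
    (by norm_num)) (by norm_num)).continuousAt

lemma Res_le {c : ℝ} (hc : 0 < c) {h u : E3 → ℝ} (H : Res c h u)
    (hu : ContDiffOn ℝ 2 (hx u) E0) (hh : ContinuousOn h (sphere (0:E3) 1)) {p : E3}
    (hp : p ∈ sphere (0:E3) 1) : 0 ≤ c * u p - h p - aL (hx u) p := by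
  have hpn : ‖p‖ = 1 := by simpa using hp
  have key : ∀ n : ℕ, ∃ q ∈ sphere (0:E3) 1, ‖q - p‖^2 ≤ 4 * (1/((n:ℝ)+1)) ∧
      - (c+3) * (1/((n:ℝ)+1)) ≤ c * u q - h q - aL (hx u) q := by
    intro n
    set ε := 1/((n:ℝ)+1) with hε
    have hε0 : 0 < ε := by positivity
    have hε1 : ε ≤ 1 := by
      rw [hε, div_le_one (by positivity)]; linarith [show (0:ℝ) ≤ n by positivity]
    obtain ⟨f, hf, hb⟩ := H (ε^2) (by positivity)
    have hfs := pol_smooth hf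
    have hps := pol_smooth (pol_inner p)
    let k : E3 → ℝ := f - ε • (fun y : E3 => (⟪p, y⟫ : ℝ))
    have hk : ContDiff ℝ (⊤ : ℕ∞) k := hfs.sub (smooth_smul ε hps)
    have hkL : ∀ y, aL k y = aL f y + ε * (2 * ⟪p, y⟫) := by
      intro y
      simp only [k]
      rw [aL_sub hfs (smooth_smul ε hps), aL_smul]
      simp only [Pi.sub_apply, Pi.smul_apply, smul_eq_mul]
      rw [aL_inner]; ring
    obtain ⟨q, hq, hmax⟩ := exists_max_sphere (f := hx u - k) (r := 1) zero_le_one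
      ((hu.continuousOn.mono sphere_sub_E0).sub hk.continuous.continuousOn)
    have hqn : ‖q‖ = 1 := by simpa using hq
    have hq0 := E0_of_sphere hq
    have hL : aL (hx u - k) q ≤ 0 := aL_le_of_max
      ((contDiffAt_of_on hu hq0).sub (smooth_two hk q)) (Eventually.of_forall fun y hy =>
        hmax y (by rw [mem_sphere_zero_iff_norm, hy, hqn]))
    rw [aL_sub_at (contDiffAt_of_on hu hq0) (smooth_two hk q), hkL] at hL
    have hm := hmax p hp
    simp only [Pi.sub_apply, Pi.smul_apply, smul_eq_mul, k, hx_sphere u hp, hx_sphere u hq,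
      real_inner_self_eq_norm_sq, hpn] at hm
    obtain ⟨b1, b2⟩ := hb q hq
    obtain ⟨b3, b4⟩ := hb p hp
    rw [abs_le] at b1 b2 b3
    have hin : ⟪p, q⟫ ≤ (1:ℝ) := by
      have := real_inner_le_norm p q
      rwa [hpn, hqn, one_mul] at this
    refine ⟨q, hq, ?_, ?_⟩
    · rw [norm_sub_sq_real, hpn, hqn, real_inner_comm]
      have : ε * (1 - ⟪p, q⟫) ≤ ε * (2 * ε) := by nlinarith [b1.1, b1.2, b3.1, b3.2]
      have := le_of_mul_le_mul_left this hε0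
      linarith
    · have e1 : ε^2 ≤ ε := by nlinarith
      have e2 : ε * ⟪p, q⟫ ≤ ε * 1 := by gcongr
      have e3 : c * (f q - u q) ≤ c * ε := by
        gcongr; linarith [b1.2]
      have e4 := b2.1
      nlinarith [b2.1, b2.2]
  choose q hq hqd hqb using key
  have hlim : ∀ K : ℝ, Tendsto (fun N : ℕ => K * (1/((N:ℝ)+1))) atTop (𝓝 0) := fun K => by
    simpa using tendsto_one_div_add_atTop_nhds_zero_nat.const_mul K
  have hqp : Tendsto q atTop (𝓝 p) := by
    rw [tendsto_iff_norm_sub_tendsto_zero]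
    have h2 : Tendsto (fun n => ‖q n - p‖^2) atTop (𝓝 0) :=
      squeeze_zero (fun _ => by positivity) hqd (hlim 4)
    have h3 := h2.sqrt
    simpa [Real.sqrt_sq] using h3
  have hG : ContinuousOn (fun y => c * u y - h y - aL (hx u) y) (sphere (0:E3) 1) :=
    ((continuousOn_const.mul (continuousOn_of_hx hu.continuousOn)).sub hh).sub
      ((aL_continuousOn hu).mono sphere_sub_E0)
  have hGq := (hG p hp).tendsto.comp (tendsto_nhdsWithin_iff.2 ⟨hqp, Eventually.of_forall hq⟩)
  exact le_of_tendsto_of_tendsto (hlim (-(c+3))) hGq (Eventually.of_forall hqb)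

lemma Res_eq {c : ℝ} (hc : 0 < c) {h u : E3 → ℝ} (H : Res c h u)
    (hu : ContDiffOn ℝ 2 (hx u) E0) (hh : ContinuousOn h (sphere (0:E3) 1)) {p : E3}
    (hp : p ∈ sphere (0:E3) 1) : aL (hx u) p = c * u p - h p := by
  have h1 := Res_le hc H hu hh hp
  have e : hx ((-1:ℝ) • u) = (-1:ℝ) • hx u := rfl
  have h2 := Res_le hc (Res_smul H (-1)) (by rw [e]; exact contDiffOn_const.smul hu)
    (continuousOn_const.smul hh) hp
  rw [e, aL_smul] at h2
  simp only [Pi.smul_apply, smul_eq_mul] at h2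
  linarith

open scoped Topology

lemma fixed_exists {c κ : ℝ} (hκ : 0 ≤ κ) (hκc : κ < c) (F : E3 → ℝ → ℝ)
    (hF : ∀ v : E3 → ℝ, ContinuousOn v (sphere (0:E3) 1) →
      ContinuousOn (fun p => F p (v p)) (sphere (0:E3) 1))
    (hL : ∀ p ∈ sphere (0:E3) 1, ∀ a b, |F p a - F p b| ≤ κ * |a - b|) :
    ∃ V : E3 → ℝ, Res c (fun p => F p (V p)) V := by
  have hc : 0 < c := hκ.trans_lt hκc
  let S := sphere (0:E3) 1
  let ext : C(S, ℝ) → E3 → ℝ := fun v p => by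
    classical exact if h : p ∈ S then v ⟨p, h⟩ else 0
  have hext : ∀ v p (h : p ∈ S), ext v p = v ⟨p, h⟩ := fun v p h => by simp [ext, h]
  have hextc : ∀ v, ContinuousOn (ext v) S := by
    intro v
    rw [continuousOn_iff_continuous_domRestrict]
    have : S.domRestrict (ext v) = v := by
      funext p
      exact hext v p p.2
    rw [this]; exact v.continuous
  have hex := fun v : C(S, ℝ) => Res_exists hc (hF (ext v) (hextc v))
  choose u hu using hex
  have huc : ∀ v, ContinuousOn (u v) S := fun v =>
    continuousOn_of_hx (Res_C1 hc (hu v)).continuousOn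
  let Φ : C(S, ℝ) → C(S, ℝ) := fun v => ⟨S.domRestrict (u v),
    continuousOn_iff_continuous_domRestrict.1 (huc v)⟩
  have hΦ : ContractingWith (NNReal.mk (κ/c) (by positivity)) Φ := by
    refine ⟨?_, ?_⟩
    · exact NNReal.coe_lt_coe.1 ((div_lt_one hc).2 hκc)
    · refine LipschitzWith.of_dist_le_mul fun v w => ?_
      change _ ≤ κ / c * dist v w
      rw [ContinuousMap.dist_le (by positivity)]
      intro p
      have := Res_abs (M := κ * dist v w) hc (Res_sub (hu v) (hu w)) (fun q hq => by
        refine (hL q hq _ _).trans ?_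
        rw [hext v q hq, hext w q hq]
        gcongr
        rw [← Real.dist_eq]
        exact ContinuousMap.dist_apply_le_dist _) p p.2
      rw [div_mul_eq_mul_div, le_div_iff₀ hc, mul_comm]
      exact this
  have : Nonempty C(S, ℝ) := ⟨0⟩
  have hfix := hΦ.fixedPoint_isFixedPt
  set v := ContractingWith.fixedPoint Φ hΦ
  refine ⟨u v, Res_congr (hu v) (fun p hp => ?_) fun _ _ => rfl⟩
  have h1 : Φ v = v := hfix
  have h2 : ext v p = u v p := by
    rw [hext v p hp]
    conv_lhs => rw [← h1]
    rfl
  rw [h2]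

lemma Res_compare {c κ : ℝ} (hκ : 0 ≤ κ) (hκc : κ < c) {h₁ h₂ u₁ u₂ : E3 → ℝ}
    (H₁ : Res c h₁ u₁) (H₂ : Res c h₂ u₂)
    (hle : ∀ p ∈ sphere (0:E3) 1, h₁ p - h₂ p ≤ κ * max (u₁ p - u₂ p) 0) :
    ∀ p ∈ sphere (0:E3) 1, u₁ p ≤ u₂ p := by
  have hc : 0 < c := hκ.trans_lt hκc
  have hR := Res_sub H₁ H₂
  obtain ⟨q, hq, hmax⟩ := exists_max_sphere (f := u₁ - u₂) zero_le_one
    (continuousOn_of_hx (Res_C1 hc hR).continuousOn)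
  simp only [Pi.sub_apply] at hmax
  by_contra! hcon
  obtain ⟨p, hp, hlt⟩ := hcon
  have hpos : 0 < u₁ q - u₂ q := by linarith [hmax p hp]
  have := Res_max (M := κ * (u₁ q - u₂ q)) hc hR (fun z hz => by
    refine (hle z hz).trans ?_
    gcongr
    exact max_le (hmax z hz) hpos.le) q hq
  simp only [Pi.sub_apply] at this
  nlinarith

/-- the nonlinearity -/
def gN (f s v : ℝ) : ℝ := f / (4 * v^7) + s / (4 * v^3)

lemma gN_anti {f s a b : ℝ} (hf : 0 ≤ f) (hs : 0 ≤ s) (ha : 0 < a) (hab : a ≤ b) :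
    gN f s b ≤ gN f s a := by
  unfold gN; gcongr

lemma gN_nonneg {f s a : ℝ} (hf : 0 ≤ f) (hs : 0 ≤ s) (ha : 0 < a) : 0 ≤ gN f s a := by
  unfold gN; positivity

lemma gN_lip {f s a b Mf Ms ε : ℝ} (hf : 0 ≤ f) (hs : 0 ≤ s) (hfM : f ≤ Mf) (hsM : s ≤ Ms)
    (hε : 0 < ε) (ha : ε ≤ a) (hab : a ≤ b) :
    gN f s a - gN f s b ≤ (7 * Mf * ε⁻¹^8 + 3 * Ms * ε⁻¹^4) * (b - a) := by
  have ha0 : 0 < a := hε.trans_le ha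
  have hb0 : 0 < b := ha0.trans_le hab
  set x := a⁻¹ with hx
  set y := b⁻¹ with hy
  set E := ε⁻¹ with hE
  have hx0 : 0 < x := by positivity
  have hy0 : 0 < y := by positivity
  have hE0 : 0 < E := by positivity
  have hxE : x ≤ E := inv_anti₀ hε ha
  have hyx : y ≤ x := inv_anti₀ ha0 hab
  have hyE : y ≤ E := hyx.trans hxE
  have hd : x - y = x * y * (b - a) := by rw [hx, hy]; field_simp
  have hd2 : x - y ≤ E * E * (b - a) := by
    rw [hd]
    have : 0 ≤ b - a := by linarith
    gcongr
  have hxy : 0 ≤ x - y := by linarith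
  have hba : 0 ≤ b - a := by linarith
  have e7 : x^7 - y^7 ≤ 7 * E^8 * (b - a) := by
    calc x^7 - y^7 = (x^6 + x^5*y + x^4*y^2 + x^3*y^3 + x^2*y^4 + x*y^5 + y^6) * (x - y) := by ring
      _ ≤ (E^6 + E^5*E + E^4*E^2 + E^3*E^3 + E^2*E^4 + E*E^5 + E^6) * (E * E * (b - a)) := by
        gcongr
      _ = _ := by ring
  have e3 : x^3 - y^3 ≤ 3 * E^4 * (b - a) := by
    calc x^3 - y^3 = (x^2 + x*y + y^2) * (x - y) := by ring
      _ ≤ (E^2 + E*E + E^2) * (E * E * (b - a)) := by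
        gcongr
      _ = _ := by ring
  have hg : ∀ v, gN f s v = (f * v⁻¹^7 + s * v⁻¹^3) / 4 := by
    intro v
    simp only [gN, div_eq_mul_inv, mul_inv, inv_pow]; ring
  rw [hg, hg, ← hx, ← hy]
  have f7 : f * (x^7 - y^7) ≤ Mf * (7 * E^8 * (b - a)) := by
    have : 0 ≤ Mf := hf.trans hfM
    have h7 : 0 ≤ x^7 - y^7 := sub_nonneg.2 (by gcongr)
    gcongr
  have s3 : s * (x^3 - y^3) ≤ Ms * (3 * E^4 * (b - a)) := by
    have : 0 ≤ Ms := hs.trans hsM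
    have h7 : 0 ≤ x^3 - y^3 := sub_nonneg.2 (by gcongr)
    gcongr
  have p1 : 0 ≤ f * (x^7 - y^7) := mul_nonneg hf (sub_nonneg.2 (by gcongr))
  have p2 : 0 ≤ s * (x^3 - y^3) := mul_nonneg hs (sub_nonneg.2 (by gcongr))
  nlinarith

/-- uniqueness half: one-sided comparison of two positive solutions -/
lemma sol_le {f s V W : E3 → ℝ} (hf : ∀ p ∈ sphere (0:E3) 1, 0 ≤ f p)
    (hs : ∀ p ∈ sphere (0:E3) 1, 0 ≤ s p)
    (hV : ContDiffOn ℝ 2 (hx V) E0) (hW : ContDiffOn ℝ 2 (hx W) E0)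
    (hW0 : ∀ p ∈ sphere (0:E3) 1, 0 < W p)
    (eV : ∀ p ∈ sphere (0:E3) 1, sphLap V p = V p / 4 - gN (f p) (s p) (V p))
    (eW : ∀ p ∈ sphere (0:E3) 1, sphLap W p = W p / 4 - gN (f p) (s p) (W p)) :
    ∀ p ∈ sphere (0:E3) 1, V p ≤ W p := by
  obtain ⟨q, hq, hmax⟩ := exists_max_sphere (f := hx V - hx W) (r := 1) zero_le_one
    ((hV.continuousOn.mono sphere_sub_E0).sub (hW.continuousOn.mono sphere_sub_E0))
  have hqn : ‖q‖ = 1 := by simpa using hq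
  have hq0 := E0_of_sphere hq
  have cV := contDiffAt_of_on hV hq0
  have cW := contDiffAt_of_on hW hq0
  have hL : aL (hx V - hx W) q ≤ 0 := aL_le_of_max (cV.sub cW)
    (Eventually.of_forall fun y hy => hmax y (by rw [mem_sphere_zero_iff_norm, hy, hqn]))
  rw [aL_sub_at cV cW, ← sphLap_eq V hV hq, ← sphLap_eq W hW hq, eV q hq, eW q hq] at hL
  intro p hp
  have h1 := hmax p hp
  simp only [Pi.sub_apply, hx_sphere _ hp, hx_sphere _ hq] at h1
  by_contra! hcon
  have hlt : W q < V q := by linarith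
  have := gN_anti (hf q hq) (hs q hq) (hW0 q hq) hlt.le
  linarith

lemma sub_poly (ε : ℝ) : ∃ v ∈ Pol, ∀ p ∈ sphere (0:E3) 1, v p = ε * (1 + sin2θ p) ∧
    aL v p = ε * (4 - 6 * sin2θ p) := by
  let n : E3 := EuclideanSpace.single 2 1
  let l : E3 → ℝ := fun y => ⟪n, y⟫
  have hl : l ∈ Pol := pol_inner n
  have hl2 : l * l ∈ Pol := Pol.mul_mem hl hl
  refine ⟨ε • ((fun _ => 2) - l * l), Pol.smul_mem (Pol.sub_mem (pol_const 2) hl2) ε, fun p hp => ?_⟩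
  have hpn : ‖p‖ = 1 := by simpa using hp
  have hn : ‖n‖ = 1 := by simp [n]
  have hin : ⟪n, p⟫ = p 2 := by simp [n, inner_E3]
  have hsum : p 0^2 + p 1^2 + p 2^2 = 1 := by
    have := normsq_E3 p
    rw [hpn] at this; linarith
  constructor
  · simp only [Pi.smul_apply, Pi.sub_apply, Pi.mul_apply, smul_eq_mul, l, hin, sin2θ]
    have : p 2^2 = 1 - (p 0^2 + p 1^2) := by linarith
    rw [← pow_two, this]; ring
  · rw [aL_smul, aL_sub (pol_smooth (pol_const 2)) (pol_smooth hl2), aL_const]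
    simp only [Pi.smul_apply, Pi.sub_apply, smul_eq_mul, Pi.zero_apply]
    have := aL_inner_sq n p
    simp only [l]
    rw [this, hin, hn, hpn, sin2θ]
    have : p 2^2 = 1 - (p 0^2 + p 1^2) := by linarith
    rw [this]; ring

lemma sin2_bounds {p : E3} (hp : p ∈ sphere (0:E3) 1) : 0 ≤ sin2θ p ∧ sin2θ p ≤ 1 := by
  have hpn : ‖p‖ = 1 := by simpa using hp
  have := normsq_E3 p
  rw [hpn] at this
  unfold sin2θ
  constructor
  · positivity
  · nlinarith [sq_nonneg (p 2)]

lemma hx_gN (f s V : E3 → ℝ) (K : ℝ) : hx (fun p => K * V p + gN (f p) (s p) (V p)) =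
    fun y => K * hx V y + (hx f y / (4 * (hx V y)^7) + hx s y / (4 * (hx V y)^3)) := rfl

lemma bootstrap {c K ε : ℝ} (hc : 0 < c) {f s V : E3 → ℝ} (hε : 0 < ε)
    (hf : ContDiffOn ℝ (⊤ : ℕ∞) (hx f) E0) (hs : ContDiffOn ℝ (⊤ : ℕ∞) (hx s) E0)
    (hV : ∀ p ∈ sphere (0:E3) 1, ε ≤ V p)
    (H : Res c (fun p => K * V p + gN (f p) (s p) (V p)) V) (k : ℕ) :
    ContDiffOn ℝ k (hx V) E0 := by
  induction k with
  | zero => exact (Res_C1 hc H).of_le (by simp)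
  | succ k ih =>
    have hk : ((k : ℕ) : WithTop ℕ∞) ≤ ((⊤ : ℕ∞) : WithTop ℕ∞) :=
      WithTop.coe_le_coe.2 (le_top : (k : ℕ∞) ≤ ⊤)
    have hne : ∀ y ∈ E0, hx V y ≠ 0 := fun y hy => (hε.trans_le (hV _ (nrm_sphere hy))).ne'
    have : ContDiffOn ℝ k (hx (fun p => K * V p + gN (f p) (s p) (V p))) E0 := by
      rw [hx_gN]
      refine (contDiffOn_const.mul ih).add (ContDiffOn.add ?_ ?_)
      · exact (hf.of_le hk).div (contDiffOn_const.mul (ih.pow 7))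
          fun y hy => mul_ne_zero (by norm_num) (pow_ne_zero _ (hne y hy))
      · exact (hs.of_le hk).div (contDiffOn_const.mul (ih.pow 3))
          fun y hy => mul_ne_zero (by norm_num) (pow_ne_zero _ (hne y hy))
    have := Res_smooth hc k H this
    push_cast
    exact this

lemma main_exists (A J : ℝ) (hAJ : 0 < A ∨ J ≠ 0)
    (s : E3 → ℝ) (hsmooth : ContDiffOn ℝ (⊤ : ℕ∞) (hx s) E0)
    (hs0 : ∀ p ∈ sphere (0:E3) 1, 0 ≤ s p) {C : ℝ}
    (hC : ∀ p ∈ sphere (0:E3) 1, s p ≤ C) :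
    ∃ V : E3 → ℝ, ∃ ε M : ℝ, 0 < ε ∧ 0 < M ∧ (∀ p ∈ sphere (0:E3) 1, ε ≤ V p ∧ V p ≤ M) ∧
      ContDiffOn ℝ (⊤ : ℕ∞) (hx V) E0 ∧
      ∀ p ∈ sphere (0:E3) 1, sphLap V p = V p / 4 - gN (3*A^2 + 9*J^2 * sin2θ p) (s p) (V p) := by
  set f : E3 → ℝ := fun p => 3*A^2 + 9*J^2 * sin2θ p with hfdef
  have hf0 : ∀ p ∈ sphere (0:E3) 1, 0 ≤ f p := fun p hp => by
    have := (sin2_bounds hp).1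
    simp only [hfdef]; positivity
  set Mf := 3*A^2 + 9*J^2 with hMf
  have hfM : ∀ p ∈ sphere (0:E3) 1, f p ≤ Mf := fun p hp => by
    have := (sin2_bounds hp).2
    simp only [hfdef, hMf]
    nlinarith [sq_nonneg J]
  have hfs : ContDiff ℝ (⊤ : ℕ∞) f := by
    simp only [hfdef, sin2θ]; fun_prop
  set Ms := |C| with hMs
  have hsM : ∀ p ∈ sphere (0:E3) 1, s p ≤ Ms := fun p hp => (hC p hp).trans (le_abs_self C)
  have hMs0 : 0 ≤ Ms := abs_nonneg _
  have hMf0 : 0 ≤ Mf := by positivity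
  set m0 := 3*A^2 + 27/5*J^2 with hm0
  have hm0p : 0 < m0 := by
    rcases hAJ with h | h <;> positivity
  set ε := min (1/2) (m0/10) with hεdef
  have hε : 0 < ε := by positivity
  have hε1 : ε ≤ 1/2 := min_le_left _ _
  have hε2 : ε ≤ m0/10 := min_le_right _ _
  set K := 7 * Mf * ε⁻¹^8 + 3 * Ms * ε⁻¹^4 with hK
  have hK0 : 0 ≤ K := by positivity
  set c := K + 1/4 with hcdef
  have hKc : K < c := by linarith
  have hc : 0 < c := by linarith
  -- truncated nonlinearity
  let F : E3 → ℝ → ℝ := fun p v => K * max v ε + gN (f p) (s p) (max v ε)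
  have hmono : ∀ p ∈ sphere (0:E3) 1, ∀ a b, a ≤ b → 0 ≤ F p b - F p a ∧ F p b - F p a ≤ K * (b - a) := by
    intro p hp a b hab
    have hm : max a ε ≤ max b ε := max_le_max_right _ hab
    have h1 := gN_anti (hf0 p hp) (hs0 p hp) (hε.trans_le (le_max_right a ε)) hm
    have h2 := gN_lip (hf0 p hp) (hs0 p hp) (hfM p hp) (hsM p hp) hε (le_max_right a ε) hm
    have h3 : max b ε - max a ε ≤ b - a := by
      rcases max_cases b ε with h | h <;> rcases max_cases a ε with h' | h' <;> linarith [h.1, h.2, h'.1, h'.2]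
    have h4 : K * (max b ε - max a ε) ≤ K * (b - a) := by gcongr
    simp only [F]
    rw [← hK] at h2
    constructor <;> linarith
  have hlip : ∀ p ∈ sphere (0:E3) 1, ∀ a b, |F p a - F p b| ≤ K * |a - b| := by
    intro p hp a b
    rcases le_total a b with h | h
    · rw [abs_sub_comm, abs_sub_comm a b, abs_of_nonneg (hmono p hp a b h).1,
        abs_of_nonneg (sub_nonneg.2 h)]
      exact (hmono p hp a b h).2
    · rw [abs_of_nonneg (hmono p hp b a h).1, abs_of_nonneg (sub_nonneg.2 h)]
      exact (hmono p hp b a h).2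
  have hmax : ∀ p ∈ sphere (0:E3) 1, ∀ a b, F p a - F p b ≤ K * max (a - b) 0 := by
    intro p hp a b
    rcases le_total a b with h | h
    · have := (hmono p hp a b h).1
      have : 0 ≤ K * max (a - b) 0 := by positivity
      linarith
    · refine (hmono p hp b a h).2.trans ?_
      gcongr
      exact le_max_left _ _
  have hsc : ContinuousOn s (sphere (0:E3) 1) := continuousOn_of_hx hsmooth.continuousOn
  have hFc : ∀ v : E3 → ℝ, ContinuousOn v (sphere (0:E3) 1) →
      ContinuousOn (fun p => F p (v p)) (sphere (0:E3) 1) := by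
    intro v hv
    have hmx : ContinuousOn (fun p => max (v p) ε) (sphere (0:E3) 1) :=
      hv.sup continuousOn_const
    have hne : ∀ p, max (v p) ε ≠ 0 := fun p => (hε.trans_le (le_max_right _ _)).ne'
    refine (continuousOn_const.mul hmx).add (ContinuousOn.add ?_ ?_)
    · exact hfs.continuous.continuousOn.div (continuousOn_const.mul (hmx.pow 7))
        fun p _ => mul_ne_zero (by norm_num) (pow_ne_zero _ (hne p))
    · exact hsc.div (continuousOn_const.mul (hmx.pow 3))
        fun p _ => mul_ne_zero (by norm_num) (pow_ne_zero _ (hne p))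
  obtain ⟨V, hV⟩ := fixed_exists hK0 hKc F hFc hlip
  -- lower bound
  obtain ⟨v, hvP, hv⟩ := sub_poly ε
  have hlow : ∀ p ∈ sphere (0:E3) 1, v p ≤ V p := by
    refine Res_compare hK0 hKc (Res_pol hvP) hV fun p hp => ?_
    refine le_trans ?_ (hmax p hp (v p) (V p))
    obtain ⟨e1, e2⟩ := hv p hp
    obtain ⟨s0, s1⟩ := sin2_bounds hp
    have hvε : ε ≤ v p := by rw [e1]; nlinarith
    have hv1 : v p ≤ 1 := by rw [e1]; nlinarith
    have hv0 : 0 < v p := hε.trans_le hvε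
    have hsub : v p / 4 - aL v p ≤ gN (f p) (s p) (v p) := by
      by_cases h35 : sin2θ p ≤ 3/5
      · refine le_trans ?_ (gN_nonneg (hf0 p hp) (hs0 p hp) hv0)
        rw [e2, e1]; nlinarith
      · push Not at h35
        have hfl : m0 ≤ f p := by
          simp only [hm0, hfdef]; nlinarith [sq_nonneg J]
        have h7 : f p / 4 ≤ f p / (4 * (v p)^7) := by
          have : (v p)^7 ≤ 1 := pow_le_one₀ hv0.le hv1
          have hfp := hf0 p hp
          apply div_le_div_of_nonneg_left hfp (by positivity)
          linarith
        have h3 : 0 ≤ s p / (4 * (v p)^3) := by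
          have := hs0 p hp
          positivity
        unfold gN
        have : v p / 4 - aL v p ≤ 5/2 * ε := by rw [e2, e1]; nlinarith
        linarith
    have : F p (v p) = K * v p + gN (f p) (s p) (v p) := by simp only [F, max_eq_left hvε]
    rw [this]
    have : c * v p = K * v p + v p / 4 := by rw [hcdef]; ring
    linarith
  have hVε : ∀ p ∈ sphere (0:E3) 1, ε ≤ V p := fun p hp => by
    refine le_trans ?_ (hlow p hp)
    rw [(hv p hp).1]
    nlinarith [(sin2_bounds hp).1]
  -- upper bound
  set M := 1 + Mf + Ms with hM
  have hM1 : 1 ≤ M := by linarith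
  have hup : ∀ p ∈ sphere (0:E3) 1, V p ≤ M := by
    refine Res_compare hK0 hKc hV (Res_pol (pol_const M)) fun p hp => ?_
    refine le_trans ?_ (hmax p hp (V p) M)
    have hME : max M ε = M := max_eq_left (by linarith)
    have hg : gN (f p) (s p) M ≤ M / 4 := by
      have a1 : f p / (4 * M^7) ≤ Mf / (4 * 1) := by
        have := hfM p hp
        have : 1 ≤ M^7 := one_le_pow₀ hM1
        gcongr
      have a2 : s p / (4 * M^3) ≤ Ms / (4 * 1) := by
        have := hsM p hp
        have : 1 ≤ M^3 := one_le_pow₀ hM1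
        gcongr
      unfold gN
      linarith
    have : F p M = K * M + gN (f p) (s p) M := by simp only [F, hME]
    rw [this, aL_const]
    simp only [Pi.zero_apply]
    have : c * M = K * M + M / 4 := by rw [hcdef]; ring
    linarith
  -- regularity
  have hRes : Res c (fun p => K * V p + gN (f p) (s p) (V p)) V :=
    Res_congr hV (fun p hp => by simp only [F, max_eq_left (hVε p hp)]) fun _ _ => rfl
  have hfx : ContDiffOn ℝ (⊤ : ℕ∞) (hx f) E0 := fun y hy => (hx_pol hfs hy).contDiffWithinAt
  have hk := bootstrap hc hε hfx hsmooth hVε hRes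
  have hVs : ContDiffOn ℝ (⊤ : ℕ∞) (hx V) E0 := contDiffOn_infty.2 hk
  have hV2 : ContDiffOn ℝ 2 (hx V) E0 := hVs.of_le two_le_smooth
  refine ⟨V, ε, M, hε, by linarith, fun p hp => ⟨hVε p hp, hup p hp⟩, hVs, fun p hp => ?_⟩
  have hVc := continuousOn_of_hx hV2.continuousOn
  have hcont : ContinuousOn (fun p => K * V p + gN (f p) (s p) (V p)) (sphere (0:E3) 1) :=
    (hFc V hVc).congr fun q hq => by simp only [F, max_eq_left (hVε q hq)]
  rw [sphLap_eq V hV2 hp, Res_eq hc hRes hV2 hcont hp, hcdef]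
  ring

lemma main_aux
    (A J : ℝ) (hAJ : 0 < A ∨ J ≠ 0)
    (σ₀ : E3 → ℝ) (hsmooth : SmoothOnSphere σ₀)
    (hnonneg : ∀ p ∈ sphere (0:E3) 1, 0 ≤ σ₀ p)
    (hbdd : ∃ C, ∀ p ∈ sphere (0:E3) 1, σ₀ p ≤ C) :
    ∃ V : E3 → ℝ,
      (SmoothOnSphere V ∧ (∀ p ∈ sphere (0:E3) 1, 0 < V p) ∧
        (∀ p ∈ sphere (0:E3) 1,
          sphLap V p - V p / 4 =
            -(3*A^2 + 9*J^2 * sin2θ p) / (4 * (V p)^7) - σ₀ p / (4 * (V p)^3))) ∧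
      (∃ cm cp : ℝ, 0 < cm ∧ 0 < cp ∧
        ∀ p ∈ sphere (0:E3) 1, cm ≤ V p ∧ V p ≤ cp) ∧
      ∀ W : E3 → ℝ,
        (SmoothOnSphere W ∧ (∀ p ∈ sphere (0:E3) 1, 0 < W p) ∧
          (∀ p ∈ sphere (0:E3) 1,
            sphLap W p - W p / 4 =
              -(3*A^2 + 9*J^2 * sin2θ p) / (4 * (W p)^7) - σ₀ p / (4 * (W p)^3))) →
        Set.EqOn W V (sphere (0:E3) 1) := by
  obtain ⟨C, hC⟩ := hbdd
  obtain ⟨V, ε, M, hε, hM, hb, hVs, hVe⟩ := main_exists A J hAJ σ₀ hsmooth hnonneg hC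
  have hf0 : ∀ p ∈ sphere (0:E3) 1, 0 ≤ 3*A^2 + 9*J^2 * sin2θ p := fun p hp => by
    have := (sin2_bounds hp).1
    positivity
  refine ⟨V, ⟨hVs, fun p hp => hε.trans_le (hb p hp).1, fun p hp => ?_⟩, ⟨ε, M, hε, hM, hb⟩, ?_⟩
  · rw [hVe p hp, gN, neg_div]; ring
  · rintro W ⟨hWs, hW0, hWe⟩ p hp
    have hWe' : ∀ p ∈ sphere (0:E3) 1,
        sphLap W p = W p / 4 - gN (3*A^2 + 9*J^2 * sin2θ p) (σ₀ p) (W p) := fun q hq => by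
      have := hWe q hq
      rw [neg_div] at this
      rw [gN]; linarith
    have hW2 : ContDiffOn ℝ 2 (hx W) E0 := ContDiffOn.of_le hWs two_le_smooth
    have hV2 : ContDiffOn ℝ 2 (hx V) E0 := hVs.of_le two_le_smooth
    exact le_antisymm
      (sol_le hf0 hnonneg hW2 hV2 (fun p hp => hε.trans_le (hb p hp).1) hWe' hVe p hp)
      (sol_le hf0 hnonneg hV2 hW2 hW0 hVe hWe' p hp)

/-- Lemma 4.1: there exists a unique positive `C^∞` solution `V` on `S²`
of `Δ̃V - V/4 = -(3A² + 9J²sin²θ)/(4V⁷) - σ₀/(4V³)`, and it is bounded below and above by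
positive constants. -/
theorem angular_equation_existence_uniqueness
    (A J : ℝ) (hA : 0 ≤ A) (hAJ : 0 < A ∨ J ≠ 0)
    (σ₀ : E3 → ℝ) (hsmooth : SmoothOnSphere σ₀)
    (hnonneg : ∀ p ∈ sphere (0:E3) 1, 0 ≤ σ₀ p)
    (hbdd : ∃ C, ∀ p ∈ sphere (0:E3) 1, σ₀ p ≤ C) :
    ∃ V : E3 → ℝ,
      (SmoothOnSphere V ∧ (∀ p ∈ sphere (0:E3) 1, 0 < V p) ∧
        (∀ p ∈ sphere (0:E3) 1,
          sphLap V p - V p / 4 =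
            -(3*A^2 + 9*J^2 * sin2θ p) / (4 * (V p)^7) - σ₀ p / (4 * (V p)^3))) ∧
      (∃ cm cp : ℝ, 0 < cm ∧ 0 < cp ∧
        ∀ p ∈ sphere (0:E3) 1, cm ≤ V p ∧ V p ≤ cp) ∧
      ∀ W : E3 → ℝ,
        (SmoothOnSphere W ∧ (∀ p ∈ sphere (0:E3) 1, 0 < W p) ∧
          (∀ p ∈ sphere (0:E3) 1,
            sphLap W p - W p / 4 =
              -(3*A^2 + 9*J^2 * sin2θ p) / (4 * (W p)^7) - σ₀ p / (4 * (W p)^3))) →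
        Set.EqOn W V (sphere (0:E3) 1) := by
  exact main_aux A J hAJ σ₀ hsmooth hnonneg hbdd
end
end

section
/- Assume A > 0 or J ≠ 0, and set c₊ = (2 sup_{S²} σ₀ + √(6A² + 18J²))^{1/4}. Then the constant function c₊ is a supersolution: for every (θ,φ) ∈ S², −c₊/4 ≤ −(3A² + 9J² sin²θ)/(4c₊⁷) − σ₀(θ,φ)/(4c₊³). -/
open MeasureTheory Real Filter Metric Set
open scoped ENNReal RealInnerProductSpace NNReal

noncomputable section

/-- the constant `c₊ = (2 sup σ₀ + √(6A² + 18J²))^{1/4}` is a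
supersolution: `-c₊/4 ≤ -(3A² + 9J²sin²θ)/(4c₊⁷) - σ₀/(4c₊³)` on `S²`. -/
theorem constant_supersolution
    (A J : ℝ) (hA : 0 ≤ A) (hAJ : 0 < A ∨ J ≠ 0)
    (σ₀ : E3 → ℝ) (hsmooth : SmoothOnSphere σ₀)
    (hnonneg : ∀ p ∈ sphere (0:E3) 1, 0 ≤ σ₀ p)
    (hbdd : ∃ C, ∀ p ∈ sphere (0:E3) 1, σ₀ p ≤ C) :
    ∀ p ∈ sphere (0:E3) 1,
      -(2 * sSup (σ₀ '' sphere (0:E3) 1) + Real.sqrt (6*A^2 + 18*J^2)) ^ ((1:ℝ)/4) / 4 ≤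
        -(3*A^2 + 9*J^2 * sin2θ p) /
            (4 * ((2 * sSup (σ₀ '' sphere (0:E3) 1) + Real.sqrt (6*A^2 + 18*J^2)) ^ ((1:ℝ)/4))^7)
          - σ₀ p /
            (4 * ((2 * sSup (σ₀ '' sphere (0:E3) 1) + Real.sqrt (6*A^2 + 18*J^2)) ^ ((1:ℝ)/4))^3) := by
  intro p hp
  obtain ⟨C, hC⟩ := hbdd
  have hS : σ₀ p ≤ sSup (σ₀ '' sphere (0:E3) 1) := by
    apply le_csSup
    · refine ⟨C, ?_⟩
      rintro _ ⟨q, hq, rfl⟩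
      exact hC q hq
    · exact ⟨p, hp, rfl⟩
  have h0 := hnonneg p hp
  have hpos : 0 < 6*A^2 + 18*J^2 := by
    rcases hAJ with h | h <;> positivity
  have hQ : 0 < Real.sqrt (6*A^2 + 18*J^2) := Real.sqrt_pos.mpr hpos
  have hQ2 : Real.sqrt (6*A^2 + 18*J^2) ^ 2 = 6*A^2 + 18*J^2 := Real.sq_sqrt hpos.le
  have hs : sin2θ p ≤ 1 := by
    have h1 : ‖p‖ = 1 := by simpa using hp
    have h2 := EuclideanSpace.norm_sq_eq p
    rw [h1, Fin.sum_univ_three] at h2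
    simp only [Real.norm_eq_abs, sq_abs] at h2
    unfold sin2θ
    nlinarith [sq_nonneg (p 2)]
  generalize sSup (σ₀ '' sphere (0:E3) 1) = S at *
  generalize Real.sqrt (6*A^2 + 18*J^2) = Q at *
  have hX : 0 < 2 * S + Q := by linarith
  have hc : 0 < (2 * S + Q) ^ ((1:ℝ)/4) := Real.rpow_pos_of_pos hX _
  have hc4 : ((2 * S + Q) ^ ((1:ℝ)/4)) ^ 4 = 2 * S + Q := by
    rw [← Real.rpow_natCast, ← Real.rpow_mul hX.le]
    norm_num
  generalize (2 * S + Q) ^ ((1:ℝ)/4) = c at *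
  have hJ : J^2 * sin2θ p ≤ J^2 := by nlinarith [sq_nonneg J]
  have key : 3*A^2 + 9*J^2 * sin2θ p + σ₀ p * c^4 ≤ c^8 := by
    have h8 : c^8 = (c^4)^2 := by ring
    rw [h8, hc4]
    have hS0 : 0 ≤ S := h0.trans hS
    nlinarith [mul_le_mul_of_nonneg_right hS hX.le, mul_nonneg hS0 hQ.le, mul_nonneg hS0 hS0,
      sq_nonneg A, sq_nonneg J]
  have e : -(3*A^2 + 9*J^2 * sin2θ p) / (4 * c^7) - σ₀ p / (4 * c^3) - (-c / 4)
      = (c^8 - (3*A^2 + 9*J^2 * sin2θ p + σ₀ p * c^4)) / (4 * c^7) := by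
    field_simp
    ring
  have : 0 ≤ (c^8 - (3*A^2 + 9*J^2 * sin2θ p + σ₀ p * c^4)) / (4 * c^7) :=
    div_nonneg (by linarith) (by positivity)
  linarith
end
end
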